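/- arXiv:2505.11226 — 2 statements merged into one kernel-verified Lean document; each statement's English description precedes it below -/
import Mathlib

section
/- Fix an integer n ≥ 1. Let F(Y,X₁,…,Xₙ) ∈ ℤ[Y,X₁,…,Xₙ] be irreducible in ℚ[Y,X₁,…,Xₙ], of total degree D, with deg_Y F ≥ 2, and suppose the coefficient of Y^{deg_Y F} in F (viewed as a polynomial in Y over ℤ[X₁,…,Xₙ]) is a nonzero constant. Then there exists an integer e(n) ≥ 1 depending only on n, and a constant C depending only on n and D, such that N(F,B) ≤ C · (log(‖F‖+2))^{e(n)} · B^{n−1/2} · (log B)^{e(n)} for all real B ≥ 3. -/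
open Polynomial

noncomputable section

/-- The rational function field `ℚ(X₁,…,Xₙ)`. -/
abbrev RF (n : ℕ) := FractionRing (MvPolynomial (Fin n) ℚ)

/-- Base change a polynomial `F ∈ ℤ[Y,X₁,…,Xₙ]` (written as a polynomial in `Y`
with coefficients in `ℤ[X₁,…,Xₙ]`) to `ℚ[Y,X₁,…,Xₙ]`. -/
def toQ {n : ℕ} (F : Polynomial (MvPolynomial (Fin n) ℤ)) :
    Polynomial (MvPolynomial (Fin n) ℚ) :=
  F.map (MvPolynomial.map (Int.castRingHom ℚ))

/-- View a polynomial in `ℚ[X][Y]` as a polynomial in `ℚ(X)[Y]`. -/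
def toFracQ {n : ℕ} (F : Polynomial (MvPolynomial (Fin n) ℚ)) : Polynomial (RF n) :=
  F.map (algebraMap (MvPolynomial (Fin n) ℚ) (RF n))

/-- View a polynomial in `ℤ[X][Y]` as a polynomial in `ℚ(X)[Y]`. -/
def toFrac {n : ℕ} (F : Polynomial (MvPolynomial (Fin n) ℤ)) : Polynomial (RF n) :=
  toFracQ (toQ F)

/-- The degree of `F(Y,X)` in the variable `Xᵢ`. -/
def degX {n : ℕ} {R : Type*} [CommSemiring R]
    (F : Polynomial (MvPolynomial (Fin n) R)) (i : Fin n) : ℕ :=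
  F.support.sup fun k => (F.coeff k).degreeOf i

/-- The total degree of `F(Y,X₁,…,Xₙ)` as a polynomial in `n+1` variables. -/
def totalDeg {n : ℕ} {R : Type*} [CommSemiring R]
    (F : Polynomial (MvPolynomial (Fin n) R)) : ℕ :=
  F.support.sup fun k => k + (F.coeff k).totalDegree

/-- `‖g‖`: the maximum absolute value of a coefficient of `g ∈ ℤ[X₁,…,Xₙ]`. -/
def mvNorm {n : ℕ} (g : MvPolynomial (Fin n) ℤ) : ℕ :=
  g.support.sup fun m => (g.coeff m).natAbs

/-- `‖F‖`: the maximum absolute value of a coefficient of `F ∈ ℤ[Y,X₁,…,Xₙ]`. -/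
def polyNorm {n : ℕ} (F : Polynomial (MvPolynomial (Fin n) ℤ)) : ℕ :=
  F.support.sup fun k => mvNorm (F.coeff k)

/-- The counting function
`N(F,B) = #{x ∈ ℤⁿ ∩ [−B,B]ⁿ : ∃ y ∈ ℤ, F(y,x) = 0}`. -/
def NFB {n : ℕ} (F : Polynomial (MvPolynomial (Fin n) ℤ)) (B : ℝ) : ℕ :=
  Set.ncard {x : Fin n → ℤ | (∀ i, |(x i : ℝ)| ≤ B) ∧
    ∃ y : ℤ, Polynomial.eval y (F.map (MvPolynomial.eval x)) = 0}

/-- `F ∈ ℤ[Y,X₁,…,Xₙ]` is absolutely irreducible: irreducible over `ℚ̄`. -/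
def AbsIrred {n : ℕ} (F : Polynomial (MvPolynomial (Fin n) ℤ)) : Prop :=
  Irreducible (F.map (MvPolynomial.map (Int.castRingHom (AlgebraicClosure ℚ))))

/-- `G` has positive degree in `Y` and in each variable `Xᵢ`. -/
def AllPosDeg {n : ℕ} (G : Polynomial (MvPolynomial (Fin n) ℤ)) : Prop :=
  0 < G.natDegree ∧ ∀ i : Fin n, 0 < degX G i

/-- A field extension `M` of `ℚ(X₁,…,Xₙ)` is an `n`-genuine extension: every
`G ∈ ℤ[Y,X₁,…,Xₙ]` irreducible over `ℚ(X)` with `M ≅ ℚ(X)[Y]/(G)` has positive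
degree in each of `Y, X₁, …, Xₙ`. -/
def IsGenuineExt (n : ℕ) (M : Type*) [Field M] [Algebra (RF n) M] : Prop :=
  ∀ G : Polynomial (MvPolynomial (Fin n) ℤ), Irreducible (toFrac G) →
    Nonempty (AdjoinRoot (toFrac G) ≃ₐ[RF n] M) → AllPosDeg G

/-- A field extension `M` of `ℚ(X₁,…,Xₙ)` is strongly `n`-genuine: every
intermediate field strictly containing `ℚ(X)` is `n`-genuine. -/
def IsStronglyGenuineExt (n : ℕ) (M : Type*) [Field M] [Algebra (RF n) M] : Prop :=
  ∀ M' : IntermediateField (RF n) M, M' ≠ ⊥ → IsGenuineExt n M'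

/-- The extension `ℚ(X)[Y]/(Fq)` presented by `Fq ∈ ℚ[X][Y]` is `n`-genuine. -/
def GenuineExtOfQ {n : ℕ} (Fq : Polynomial (MvPolynomial (Fin n) ℚ)) : Prop :=
  ∀ G : Polynomial (MvPolynomial (Fin n) ℤ), Irreducible (toFrac G) →
    Nonempty (AdjoinRoot (toFrac G) ≃ₐ[RF n] AdjoinRoot (toFracQ Fq)) → AllPosDeg G

/-- The extension `ℚ(X)[Y]/(Fq)` presented by `Fq ∈ ℚ[X][Y]` is strongly
`n`-genuine: for any field `M` isomorphic over `ℚ(X)` to `ℚ(X)[Y]/(Fq)`, every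
intermediate field strictly containing `ℚ(X)` is `n`-genuine. -/
def StronglyGenuineExtOfQ {n : ℕ} (Fq : Polynomial (MvPolynomial (Fin n) ℚ)) : Prop :=
  ∀ (M : Type) [Field M] [Algebra (RF n) M],
    Nonempty (AdjoinRoot (toFracQ Fq) ≃ₐ[RF n] M) → IsStronglyGenuineExt n M

/-- An absolutely irreducible `F ∈ ℤ[Y,X₁,…,Xₙ]` is an `n`-genuine polynomial. -/
def IsGenuinePoly {n : ℕ} (F : Polynomial (MvPolynomial (Fin n) ℤ)) : Prop :=
  AbsIrred F ∧ GenuineExtOfQ (toQ F)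

/-- An absolutely irreducible `F ∈ ℤ[Y,X₁,…,Xₙ]` is a strongly `n`-genuine polynomial. -/
def IsStronglyGenuinePoly {n : ℕ} (F : Polynomial (MvPolynomial (Fin n) ℤ)) : Prop :=
  AbsIrred F ∧ StronglyGenuineExtOfQ (toQ F)

/-- The ring map `ℚ[X₁,…,Xₙ] → ℚ[X₁,…,Xₙ]` induced by the linear substitution
`Xᵢ ↦ Σⱼ σᵢⱼ Xⱼ`. -/
def lsubMv {n : ℕ} (σ : Matrix (Fin n) (Fin n) ℚ) :
    MvPolynomial (Fin n) ℚ →+* MvPolynomial (Fin n) ℚ :=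
  (MvPolynomial.aeval (R := ℚ)
    fun i => ∑ j, MvPolynomial.C (σ i j) * MvPolynomial.X j).toRingHom

/-- `F_σ(Y,X) := F(Y,σ(X))` for a linear change of variables `σ`. -/
def applyGL {n : ℕ} (σ : Matrix (Fin n) (Fin n) ℚ)
    (Fq : Polynomial (MvPolynomial (Fin n) ℚ)) : Polynomial (MvPolynomial (Fin n) ℚ) :=
  Fq.map (lsubMv σ)

/-- `F` is `(1,n)`-allowable: absolutely irreducible, monic in `Y`, and
`ℚ(X)[Y]/(F_σ)` is an `n`-genuine extension for every `σ ∈ GLₙ(ℚ)`. -/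
def IsAllowable {n : ℕ} (F : Polynomial (MvPolynomial (Fin n) ℤ)) : Prop :=
  AbsIrred F ∧ F.Monic ∧
    ∀ σ : Matrix (Fin n) (Fin n) ℚ, IsUnit σ.det → GenuineExtOfQ (applyGL σ (toQ F))

/-- `F` is strongly `(1,n)`-allowable: absolutely irreducible, monic in `Y`, and
`ℚ(X)[Y]/(F_σ)` is a strongly `n`-genuine extension for every `σ ∈ GLₙ(ℚ)`. -/
def IsStronglyAllowable {n : ℕ} (F : Polynomial (MvPolynomial (Fin n) ℤ)) : Prop :=
  AbsIrred F ∧ F.Monic ∧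
    ∀ σ : Matrix (Fin n) (Fin n) ℚ, IsUnit σ.det → StronglyGenuineExtOfQ (applyGL σ (toQ F))

/-- `F` has the form (1.2) with parameter `m`:
`F = Y^{md} + f₁(X) Y^{m(d-1)} + ⋯ + f_{d-1}(X) Y^m + f_d(X)` with `f_d ≠ 0`. -/
def HasForm (n m : ℕ) (F : Polynomial (MvPolynomial (Fin n) ℤ)) : Prop :=
  ∃ (d : ℕ) (f : ℕ → MvPolynomial (Fin n) ℤ), 1 ≤ d ∧ f d ≠ 0 ∧
    F = Polynomial.X ^ (m * d) +
      ∑ j ∈ Finset.Icc 1 d, Polynomial.C (f j) * Polynomial.X ^ (m * (d - j))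

/-- `P` has a linear factor in `Y`: `P = (Y − Q(X))·H̃(Y,X)`. -/
def HasLinearFactorY {n : ℕ} {R : Type*} [CommRing R]
    (P : Polynomial (MvPolynomial (Fin n) R)) : Prop :=
  ∃ (Q : MvPolynomial (Fin n) R) (H : Polynomial (MvPolynomial (Fin n) R)),
    P = (Polynomial.X - Polynomial.C Q) * H

/-- The canonical map `ℚ[X₁,…,Xₙ] → ℚ(X)[Y]/(F)`. -/
def structMap {n : ℕ} (F : Polynomial (MvPolynomial (Fin n) ℤ)) :
    MvPolynomial (Fin n) ℚ →+* AdjoinRoot (toFrac F) :=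
  (algebraMap (RF n) (AdjoinRoot (toFrac F))).comp
    (algebraMap (MvPolynomial (Fin n) ℚ) (RF n))

/-- `z ∈ ℚ(X)[Y]/(F)` lies in the subfield `ℚ((Xᵢ)_{i≠j})`: it can be written
as a quotient of two polynomials not involving `Xⱼ`. -/
def CoordMem {n : ℕ} (j : Fin n) (F : Polynomial (MvPolynomial (Fin n) ℤ))
    (z : AdjoinRoot (toFrac F)) : Prop :=
  ∃ a b : MvPolynomial (Fin n) ℚ,
    MvPolynomial.degreeOf j a = 0 ∧ MvPolynomial.degreeOf j b = 0 ∧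
    structMap F b ≠ 0 ∧ z * structMap F b = structMap F a

/-- `z ∈ ℚ(X)[Y]/(F)` is algebraic over the subfield `ℚ((Xᵢ)_{i≠j})`. -/
def AlgOverCoord {n : ℕ} (j : Fin n) (F : Polynomial (MvPolynomial (Fin n) ℤ))
    (z : AdjoinRoot (toFrac F)) : Prop :=
  ∃ P : Polynomial (AdjoinRoot (toFrac F)), P ≠ 0 ∧ (∀ k, CoordMem j F (P.coeff k)) ∧
    Polynomial.eval z P = 0

/-- Substitute `Xᵢ = xᵢ` for `i ∈ I` into `F`, over `ℚ̄`. -/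
def substSome {n : ℕ} (I : Finset (Fin n)) (x : Fin n → ℚ)
    (F : Polynomial (MvPolynomial (Fin n) ℤ)) :
    Polynomial (MvPolynomial (Fin n) (AlgebraicClosure ℚ)) :=
  (toQ F).map
    ((MvPolynomial.aeval (R := ℚ) fun i =>
      if i ∈ I then MvPolynomial.C (algebraMap ℚ (AlgebraicClosure ℚ) (x i))
      else MvPolynomial.X i).toRingHom)

/-- Substitute `Xᵢ = xᵢ` for all `i ≠ i₀` into `F`, over `ℚ̄`. -/
def substKeepFirst {n : ℕ} (i0 : Fin n) (x : {i : Fin n // i ≠ i0} → ℤ)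
    (F : Polynomial (MvPolynomial (Fin n) ℤ)) :
    Polynomial (MvPolynomial (Fin n) (AlgebraicClosure ℚ)) :=
  F.map
    ((MvPolynomial.aeval (R := ℤ) fun i =>
      if h : i = i0 then (MvPolynomial.X i : MvPolynomial (Fin n) (AlgebraicClosure ℚ))
      else MvPolynomial.C ((x ⟨i, h⟩ : ℤ) : AlgebraicClosure ℚ)).toRingHom)

/-- `‖L‖`: maximum absolute value of an entry of an integer matrix. -/
def matNorm {n : ℕ} (L : Matrix (Fin n) (Fin n) ℤ) : ℕ :=
  Finset.univ.sup fun p : Fin n × Fin n => (L p.1 p.2).natAbs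

/-- The standard additive character `e_p(a) = exp(2πi a/p)` on `ZMod p`. -/
def eZp (p : ℕ) (a : ZMod p) : ℂ :=
  Complex.exp (2 * Real.pi * Complex.I * (a.val : ℂ) / (p : ℂ))

/-! ### Primes -/

lemma hil_pi_lower (n v : ℕ) (hn : n + 1 ≤ 2 ^ v) : n ≤ v * (Nat.primeCounting n + 1) := by
  have h1 := Chebyshev.two_pow_le_mul_lcmUpto n
  have h2 : Nat.lcmUpto n ≤ n ^ Nat.primeCounting n := by
    rcases Nat.eq_zero_or_pos n with rfl | hpos
    · simp [Nat.lcmUpto]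
    rw [Nat.lcmUpto_eq_prod_pow_log]
    calc _ ≤ ∏ p ∈ Nat.primesLE n, n :=
          Finset.prod_le_prod' fun p hp => Nat.pow_log_le_self p hpos.ne'
      _ = _ := by simp [Nat.primesLE_card_eq_primeCounting]
  have h3 : 2 ^ n ≤ 2 ^ (v * (Nat.primeCounting n + 1)) := by
    calc 2 ^ n ≤ (n + 1) * Nat.lcmUpto n := h1
      _ ≤ 2 ^ v * (2 ^ v) ^ Nat.primeCounting n := by
        gcongr
        exact h2.trans (Nat.pow_le_pow_left (by omega) _)
      _ = _ := by rw [← pow_succ', ← pow_mul]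
  exact (Nat.pow_le_pow_iff_right (by norm_num)).1 h3

/-- many primes in an interval -/
lemma hil_primes (P t v : ℕ) (h : v * (P + t + 1) + 1 ≤ 2 ^ v) (hv : 1 ≤ v):
    ∃ S : Finset ℕ, S.card = t ∧ ∀ p ∈ S, p.Prime ∧ P ≤ p ∧ p ≤ v * (P + t + 1) := by
  set X := v * (P + t + 1) with hX
  have h1 := hil_pi_lower X v h
  have h2 : P + t ≤ Nat.primeCounting X := by
    have : P + t + 1 ≤ Nat.primeCounting X + 1 := Nat.le_of_mul_le_mul_left (hX ▸ h1) (by omega)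
    omega
  have h3 : t ≤ ((Nat.primesLE X) \ Finset.range P).card := by
    have := Finset.le_card_sdiff (Finset.range P) (Nat.primesLE X)
    rw [Nat.primesLE_card_eq_primeCounting, Finset.card_range] at this
    omega
  obtain ⟨S, hS, hc⟩ := Finset.exists_subset_card_eq h3
  refine ⟨S, hc, fun p hp => ?_⟩
  have := hS hp
  simp [Nat.mem_primesLE] at this
  exact ⟨this.1.2, this.2, this.1.1⟩

/-! ### Determinants -/

lemma hil_sum_inj {ι : Type*} [Fintype ι] (m : ι → ℕ) (hm : Function.Injective m) :
    Fintype.card ι * (Fintype.card ι - 1) / 2 ≤ ∑ i, m i := by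
  classical
  rw [← Finset.sum_range_id_mul_two, Nat.mul_div_cancel _ (by norm_num)]
  have h : ∀ (s : Finset ℕ), ∑ i ∈ Finset.range s.card, i ≤ ∑ x ∈ s, x := by
    intro s
    induction hc : s.card generalizing s with
    | zero => simp
    | succ k ih =>
      have hne : s.Nonempty := by rw [← Finset.card_pos]; omega
      have hmax := Finset.max'_mem s hne
      have h1 := ih (s.erase (s.max' hne)) (by rw [Finset.card_erase_of_mem hmax]; omega)
      rw [Finset.sum_range_succ, ← Finset.sum_erase_add _ _ hmax]
      have h2 : k ≤ s.max' hne := by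
        have : s ⊆ Finset.range (s.max' hne + 1) := fun x hx =>
          Finset.mem_range.2 (Nat.lt_succ_of_le (Finset.le_max' s x hx))
        have := Finset.card_le_card this
        simp at this; omega
      omega
  have := h (Finset.univ.image m)
  rwa [Finset.card_image_of_injective _ hm, Finset.card_univ, Finset.sum_image hm.injOn] at this

lemma hil_det_dvd {S ι : Type*} [CommRing S] [Fintype ι] [DecidableEq ι] (π : S)
    (w : ι → S[X]) (t : ι → S) :
    π ^ (Fintype.card ι * (Fintype.card ι - 1) / 2) ∣
      (Matrix.of fun i j => (w j).eval (π * t i)).det := by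
  classical
  set N := Finset.univ.sup (fun j => (w j).natDegree) + 1 with hN
  have hw : ∀ j x, (w j).eval x = ∑ m ∈ Finset.range N, (w j).coeff m * x ^ m := by
    intro j x
    apply eval_eq_sum_range' 
    exact Nat.lt_succ_of_le (Finset.le_sup (f := fun j => (w j).natDegree) (Finset.mem_univ j))
  have h1 : (Matrix.of fun i j => (w j).eval (π * t i)).det =
      (Matrix.detRowAlternating : (ι → S) [⋀^ι]→ₗ[S] S).toMultilinearMap
        (fun j => ∑ m ∈ Finset.range N, ((w j).coeff m * π ^ m) • (fun i => t i ^ m)) := by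
    rw [← Matrix.det_transpose]
    show Matrix.det _ = Matrix.det _
    congr 1
    ext j i
    simp only [Matrix.transpose_apply, Matrix.of_apply, hw, Finset.sum_apply, Pi.smul_apply, smul_eq_mul]
    refine Finset.sum_congr rfl fun m _ => ?_
    rw [mul_pow]; ring
  rw [h1, MultilinearMap.map_sum_finset]
  refine Finset.dvd_sum fun r _ => ?_
  rw [MultilinearMap.map_smul_univ]
  by_cases hr : Function.Injective r
  · rw [Finset.prod_mul_distrib, Finset.prod_pow_eq_pow_sum, smul_eq_mul]
    exact Dvd.dvd.mul_right (Dvd.dvd.mul_left (pow_dvd_pow _ (hil_sum_inj r hr)) _) _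
  · have : (Matrix.detRowAlternating : (ι → S) [⋀^ι]→ₗ[S] S).toMultilinearMap
        (fun i k => t k ^ r i) = 0 := by
      simp only [Function.Injective, not_forall] at hr
      obtain ⟨a, b, hab, hne⟩ := hr
      exact (Matrix.detRowAlternating : (ι → S) [⋀^ι]→ₗ[S] S).map_eq_zero_of_eq _ (by simp [hab]) hne
    rw [this]; simp

lemma hil_det_congr {S ι : Type*} [CommRing S] [Fintype ι] [DecidableEq ι] (π : S)
    (A B : Matrix ι ι S) (h : ∀ i j, π ∣ A i j - B i j) : π ∣ A.det - B.det := by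
  rw [← Ideal.mem_span_singleton, ← Ideal.Quotient.mk_eq_mk_iff_sub_mem,
    RingHom.map_det, RingHom.map_det]
  congr 1
  ext i j
  simp only [RingHom.mapMatrix_apply, Matrix.map_apply]
  rw [Ideal.Quotient.mk_eq_mk_iff_sub_mem, Ideal.mem_span_singleton]
  exact h i j

lemma hil_det_abs {ι : Type*} [Fintype ι] [DecidableEq ι] (A : Matrix ι ι ℤ) (c : ι → ℤ)
    (h : ∀ i j, |A i j| ≤ c j) : |A.det| ≤ (Fintype.card ι).factorial * ∏ j, c j := by
  rw [Matrix.det_apply]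
  refine (Finset.abs_sum_le_sum_abs _ _).trans ?_
  have : ∀ σ ∈ (Finset.univ : Finset (Equiv.Perm ι)),
      |Equiv.Perm.sign σ • ∏ i, A (σ i) i| ≤ ∏ j, c j := by
    intro σ _
    have h1 : |Equiv.Perm.sign σ • ∏ i, A (σ i) i| = |∏ i, A (σ i) i| := by
      rcases Int.units_eq_one_or (Equiv.Perm.sign σ) with h | h <;> simp [h]
    rw [h1, Finset.abs_prod]
    exact Finset.prod_le_prod (fun _ _ => abs_nonneg _) fun j _ => h _ j
  refine (Finset.sum_le_card_nsmul _ _ _ this).trans ?_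
  simp [Fintype.card_perm]

/-! ### Hensel -/

lemma hil_eval_eval {S : Type*} [CommRing S] (f : S[X][X]) (g : S[X]) (b : S) :
    (f.eval g).eval b = (f.map (evalRingHom b)).eval (g.eval b) := by
  have := eval₂_at_apply (p := f) (evalRingHom b) g
  rw [coe_evalRingHom] at this
  rw [← this, eval_map]

lemma hil_hensel {S : Type*} [CommRing S] (π : S) (f : S[X][X]) (b0 q0 u : S)
    (hu : u * (derivative f).evalEval b0 q0 = 1) (k : ℕ) :
    ∃ g : S[X], ∀ b q : S, π ∣ b - b0 → π ∣ q - q0 → f.evalEval b q = 0 →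
      π ^ (k + 1) ∣ q - g.eval b := by
  induction k with
  | zero => exact ⟨C q0, fun b q _ hq _ => by simpa using hq⟩
  | succ k ih =>
    obtain ⟨g, hg⟩ := ih
    refine ⟨g - C u * f.eval g, fun b q hb hq hf => ?_⟩
    have h1 := hg b q hb hq hf
    obtain ⟨e, he⟩ := h1
    have hev : (f.eval g).eval b = (f.map (evalRingHom b)).eval (g.eval b) := hil_eval_eval f g b
    have hfe : ∀ (f : S[X][X]) (y : S), f.evalEval b y = (f.map (evalRingHom b)).eval y := by
      intro f y
      simp [map_evalRingHom_eval]
    set f1 := f.map (evalRingHom b) with hf1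
    obtain ⟨z, hz⟩ := binomExpansion f1 (g.eval b) (q - g.eval b)
    have h0 : f1.eval q = 0 := by rw [← hfe, hf]
    rw [add_sub_cancel, h0] at hz
    have hder : π ∣ (derivative f1).eval (g.eval b) - (derivative f).evalEval b0 q0 := by
      have e1 : π ∣ (derivative f1).eval (g.eval b) - (derivative f1).eval q0 := by
        refine dvd_trans ?_ (sub_dvd_eval_sub _ _ _)
        have : g.eval b - q0 = (q - q0) - (q - g.eval b) := by ring
        rw [this]
        refine dvd_sub hq ?_
        rw [he]
        exact Dvd.dvd.mul_right (dvd_pow_self _ (by omega)) _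
      have e2 : π ∣ (derivative f1).eval q0 - (derivative f).evalEval b0 q0 := by
        rw [hf1, derivative_map, ← hfe, evalEval, evalEval]
        exact hb.trans (sub_dvd_eval_sub _ _ _)
      have := dvd_add e1 e2
      simpa using this
    obtain ⟨c, hc⟩ := hder
    have hc' : (derivative f1).eval (g.eval b) = (derivative f).evalEval b0 q0 + π * c := by
      rw [← hc]; ring
    rw [eval_sub, eval_mul, eval_C, hev]
    have key : q - (g.eval b - u * f1.eval (g.eval b)) =
        - (u * π * c * (q - g.eval b)) - u * z * (q - g.eval b) ^ 2 := by
      have : f1.eval (g.eval b) = - (derivative f1).eval (g.eval b) * (q - g.eval b)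
          - z * (q - g.eval b) ^ 2 := by linear_combination -hz
      rw [this, hc']
      linear_combination (-(q - g.eval b)) * hu
    rw [key, he]
    refine dvd_sub (dvd_neg.2 ⟨u * c * e, by ring⟩) ⟨u * z * e ^ 2 * π ^ k, by ring⟩

/-- divisibility of the determinant over a domain `R` in which `p` is prime -/
lemma hil_class_dvd {R ι : Type*} [CommRing R] [IsDomain R] [Fintype ι] [DecidableEq ι] (p : R)
    (hp : Prime p) (f : R[X][X]) (b0 q0 : R)
    (hu : ¬ p ∣ (derivative f).evalEval b0 q0) (w : ι → R[X][X]) (b q : ι → R)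
    (hb : ∀ i, p ∣ b i - b0) (hq : ∀ i, p ∣ q i - q0) (hf : ∀ i, f.evalEval (b i) (q i) = 0) :
    p ^ (Fintype.card ι * (Fintype.card ι - 1) / 2) ∣
      (Matrix.of fun i j => (w j).evalEval (b i) (q i)).det := by
  set u := (derivative f).evalEval b0 q0 with hudef
  set N := Fintype.card ι * (Fintype.card ι - 1) / 2
  let S := Localization.Away u
  let φ : R →+* S := algebraMap R S
  have hunit : IsUnit (φ u) := IsLocalization.Away.algebraMap_isUnit u
  obtain ⟨u', hu'⟩ := hunit.exists_left_inv
  have hmap : ∀ (f : R[X][X]) (x y : R),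
      (f.map (mapRingHom φ)).evalEval (φ x) (φ y) = φ (f.evalEval x y) := by
    intro f x y
    exact map_mapRingHom_evalEval φ f x y
  obtain ⟨g, hg⟩ := hil_hensel (φ p) (f.map (mapRingHom φ)) (φ b0) (φ q0) u' (by
    rw [derivative_map, hmap]; exact hu') N
  have hdv : ∀ i, φ p ^ N ∣ φ (q i) - g.eval (φ (b i)) := fun i => by
    refine (pow_dvd_pow _ (Nat.le_succ N)).trans (hg _ _ ?_ ?_ ?_)
    · rw [← map_sub]; exact map_dvd φ (hb i)
    · rw [← map_sub]; exact map_dvd φ (hq i)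
    · rw [hmap, hf, map_zero]
  choose t ht using hb
  have key : φ p ^ N ∣ φ ((Matrix.of fun i j => (w j).evalEval (b i) (q i)).det) := by
    have h1 := hil_det_dvd (φ p)
      (fun j : ι => (((w j).map (mapRingHom φ)).eval g).comp (X + C (φ b0))) (fun i => φ (t i))
    have h2 := hil_det_congr (φ p ^ N)
      (φ.mapMatrix (Matrix.of fun i j => (w j).evalEval (b i) (q i)))
      (Matrix.of fun i j => ((((w j).map (mapRingHom φ)).eval g).comp (X + C (φ b0))).eval (φ p * φ (t i)))
      (by
        intro i j
        have hbi : φ p * φ (t i) + φ b0 = φ (b i) := by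
          rw [← map_mul, ← ht, ← map_add]; congr 1; ring
        simp only [RingHom.mapMatrix_apply, Matrix.map_apply, Matrix.of_apply, eval_comp, eval_add,
          eval_X, eval_C, hbi]
        rw [← hmap]
        have hev : ∀ W : S[X][X], (W.eval g).eval (φ (b i)) = W.evalEval (φ (b i)) (g.eval (φ (b i))) := by
          intro W
          rw [← map_evalRingHom_eval]; exact hil_eval_eval W g _
        rw [hev]
        have : ∀ (W : S[X][X]) (y : S), W.evalEval (φ (b i)) y = (W.map (evalRingHom (φ (b i)))).eval y := by
          intro W y
          simp [map_evalRingHom_eval]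
        rw [this, this]
        exact (hdv i).trans (sub_dvd_eval_sub _ _ _))
    rw [RingHom.map_det]
    exact (dvd_iff_dvd_of_dvd_sub h2).2 h1
  obtain ⟨z, hz⟩ := key
  obtain ⟨⟨r, s⟩, hrs⟩ := IsLocalization.surj (Submonoid.powers u) z
  obtain ⟨s, k, rfl⟩ := s
  simp only at hrs
  have h3 : φ (u ^ k * (Matrix.of fun i j => (w j).evalEval (b i) (q i)).det) = φ (p ^ N * r) := by
    rw [map_mul, map_mul, hz, map_pow φ p, ← hrs]; ring
  have hinj : Function.Injective φ := by
    apply IsLocalization.injective (M := Submonoid.powers u)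
    apply powers_le_nonZeroDivisors_of_noZeroDivisors
    intro h; exact hu (by rw [h]; exact dvd_zero p)
  have h4 := hinj h3
  exact hp.pow_dvd_of_dvd_mul_left N (fun h => hu (hp.dvd_of_dvd_pow h)) ⟨r, h4⟩

lemma hil_functional {R ι κ : Type*} [CommRing R] [IsDomain R] [Fintype ι] [DecidableEq ι]
    (a : κ → ι → R) (h : ∀ β : ι → κ, (Matrix.of fun i j => a (β i) j).det = 0) :
    ∃ v : ι → R, v ≠ 0 ∧ ∀ k, ∑ j, v j * a k j = 0 := by
  classical
  let K := FractionRing R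
  let φ : R →+* K := algebraMap R K
  have hφ : Function.Injective φ := IsFractionRing.injective R K
  let a' : κ → ι → K := fun k j => φ (a k j)
  have hlt : Submodule.span K (Set.range a') < ⊤ := by
    rw [lt_top_iff_ne_top]
    intro htop
    obtain ⟨b, hb, hspan, hli⟩ := exists_linearIndependent K (Set.range a')
    rw [htop] at hspan
    let bas : Module.Basis b K (ι → K) := Module.Basis.mk hli (by
      rw [Subtype.range_coe_subtype, Set.ofPred_mem_eq, hspan])
    let e : ι ≃ b := (Pi.basisFun K ι).indexEquiv bas
    have hch : ∀ i : ι, ∃ k, a' k = (e i : ι → K) := fun i => hb (e i).2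
    choose β hβ using hch
    have h1 : LinearIndependent K (fun i : ι => a' (β i)) := by
      have := hli.comp e e.injective
      have heq : (fun i : ι => a' (β i)) = (Subtype.val ∘ e) := funext hβ
      rw [heq]
      exact this
    have h2 := (Matrix.linearIndependent_rows_iff_isUnit
      (A := (Matrix.of fun i j => a' (β i) j))).1 h1
    rw [Matrix.isUnit_iff_isUnit_det] at h2
    have h3 : (Matrix.of fun i j => a' (β i) j).det = φ ((Matrix.of fun i j => a (β i) j).det) := by
      rw [RingHom.map_det]; rfl
    rw [h3, h β, map_zero] at h2
    exact not_isUnit_zero h2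
  obtain ⟨f, hf, hle⟩ := Submodule.exists_le_ker_of_lt_top _ hlt
  have hfx : ∀ x : ι → K, f x = ∑ j, f (Pi.single j 1) * x j := by
    intro x
    conv_lhs => rw [← Finset.univ_sum_single x, map_sum]
    refine Finset.sum_congr rfl fun j _ => ?_
    have : (Pi.single j (x j) : ι → K) = x j • Pi.single j 1 := by
      rw [← Pi.single_smul]; simp
    rw [this, map_smul, smul_eq_mul, mul_comm]
  obtain ⟨d, hd⟩ := IsLocalization.exist_integer_multiples (nonZeroDivisors R) Finset.univ
    (fun j : ι => f (Pi.single j 1))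
  choose v hv using fun j => hd j (Finset.mem_univ j)
  have hd0 : φ d ≠ 0 := by
    intro h0
    exact nonZeroDivisors.coe_ne_zero d (hφ (by rw [h0, map_zero]))
  have hv' : ∀ j, φ (v j) = φ d * f (Pi.single j 1) := by
    intro j
    have := hv j
    rw [Algebra.smul_def] at this
    exact this
  refine ⟨v, ?_, fun k => ?_⟩
  · rintro rfl
    apply hf
    ext x
    rw [LinearMap.comp_apply]
    have := hv' x
    simp only [Pi.zero_apply, map_zero] at this
    have := (mul_eq_zero.1 this.symm).resolve_left hd0
    simpa using this
  · apply hφ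
    rw [map_zero, map_sum]
    have h0 : f (a' k) = 0 := hle (Submodule.subset_span ⟨k, rfl⟩)
    rw [hfx] at h0
    simp only [map_mul, hv', mul_assoc]
    rw [← Finset.mul_sum]
    rw [show (∑ i, f (Pi.single i 1) * φ (a k i)) = 0 from h0, mul_zero]

lemma hil_evalEval {S : Type*} [CommRing S] (f : S[X][X]) (b y : S) :
    f.evalEval b y = (f.map (evalRingHom b)).eval y := by
  simp [map_evalRingHom_eval]

lemma hil_zero_count {R : Type*} [CommRing R] [IsDomain R] [CharZero R] [IsIntegrallyClosed R[X]]
    (F : R[X][X]) (hF : F.Monic) (D M : ℕ)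
    (hd : F.natDegree ≤ D) (hc : ∀ j, (F.coeff j).natDegree ≤ D) (hroot : ∀ r : R[X], F.eval r ≠ 0)
    (A B : R[X]) (hA : A.natDegree ≤ M) (hB : B.natDegree ≤ M) (hAB : A ≠ 0 ∨ B ≠ 0)
    (T : Finset ℤ) (hT : ∀ b ∈ T, ∃ q : R, F.evalEval (b : R) q = 0 ∧
      A.eval (b : R) + q * B.eval (b : R) = 0) :
    T.card ≤ D + D * M + M := by
  classical
  have cnt : ∀ G : R[X], G ≠ 0 → (∀ b ∈ T, G.eval (b : R) = 0) → T.card ≤ G.natDegree := by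
    intro G hG h
    have h1 : (T.image (fun b : ℤ => (b : R))) ⊆ G.roots.toFinset := by
      intro x hx
      obtain ⟨b, hb, rfl⟩ := Finset.mem_image.1 hx
      simp [hG, h b hb]
    have h2 := Finset.card_le_card h1
    rw [Finset.card_image_of_injective _ Int.cast_injective] at h2
    exact h2.trans ((Multiset.toFinset_card_le _).trans (card_roots' G))
  by_cases hB0 : B = 0
  · have hA0 : A ≠ 0 := hAB.resolve_right (by simpa using hB0)
    refine (cnt A hA0 fun b hb => ?_).trans (by omega)
    obtain ⟨q, _, h⟩ := hT b hb
    simpa [hB0] using h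
  · set G := (F.scaleRoots B).eval (-A) with hG
    have hG0 : G ≠ 0 := by
      intro h0
      let K := FractionRing R[X]
      let φ := algebraMap R[X] K
      have hφB : φ B ≠ 0 := by
        intro h; exact hB0 (IsFractionRing.injective R[X] K (by rw [h, map_zero]))
      have h1 : eval₂ φ (φ B * (φ (-A) / φ B)) (F.scaleRoots B) = 0 := by
        rw [mul_div_cancel₀ _ hφB, eval₂_at_apply, ← hG, h0, map_zero]
      rw [scaleRoots_eval₂_mul] at h1
      have h2 := (mul_eq_zero.1 h1).resolve_left (pow_ne_zero _ hφB)
      obtain ⟨r, hr⟩ := IsIntegrallyClosed.isIntegral_iff.1 (⟨F, hF, h2⟩ : IsIntegral R[X] (φ (-A) / φ B))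
      rw [← hr, eval₂_at_apply] at h2
      exact hroot r (IsFractionRing.injective R[X] K (by rw [h2, map_zero]))
    have hdeg : G.natDegree ≤ D + D * M := by
      rw [hG, eval_eq_sum_range, natDegree_scaleRoots]
      refine natDegree_sum_le_of_forall_le _ _ fun i hi => ?_
      have hi' : i ≤ F.natDegree := by simpa [Nat.lt_succ_iff] using hi
      rw [coeff_scaleRoots]
      refine natDegree_mul_le.trans ?_
      have e1 : (F.coeff i * B ^ (F.natDegree - i)).natDegree ≤ D + (F.natDegree - i) * M :=
        natDegree_mul_le.trans (Nat.add_le_add (hc i) (natDegree_pow_le.trans (Nat.mul_le_mul_left _ hB)))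
      have e2 : ((-A) ^ i).natDegree ≤ i * M :=
        natDegree_pow_le.trans (Nat.mul_le_mul_left _ (by rwa [natDegree_neg]))
      have e3 : (F.natDegree - i) * M + i * M ≤ D * M := by
        rw [← add_mul]; exact Nat.mul_le_mul_right _ (by omega)
      omega
    refine (cnt G hG0 fun b hb => ?_).trans (by omega)
    obtain ⟨q, h1, h2⟩ := hT b hb
    rw [hG, hil_eval_eval]
    have hmap : (F.scaleRoots B).map (evalRingHom (b : R)) =
        (F.map (evalRingHom (b : R))).scaleRoots (B.eval (b : R)) := by
      rw [map_scaleRoots _ _ _ (by rw [hF]; simp)]; rfl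
    have hAq : (-A).eval (b : R) = B.eval (b : R) * q := by
      rw [eval_neg]; linear_combination -h2
    rw [hil_evalEval] at h1
    have h3 := scaleRoots_eval₂_mul (p := F.map (evalRingHom (b : R))) (RingHom.id R) q
      (B.eval (b : R))
    simp only [RingHom.id_apply, eval₂_id, h1, mul_zero] at h3
    rw [hmap, hAq, h3]

lemma hil_totalDegree_root {m : ℕ} (f : (MvPolynomial (Fin m) ℤ)[X]) (hf : f.Monic) (D : ℕ)
    (hc : ∀ j, (f.coeff j).totalDegree ≤ D) (q : MvPolynomial (Fin m) ℤ) (hq : f.eval q = 0) :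
    q.totalDegree ≤ D := by
  by_contra hlt
  push Not at hlt
  have hq0 : q ≠ 0 := by rintro rfl; simp at hlt
  have hpow : ∀ k, (q ^ k).totalDegree = k * q.totalDegree := by
    intro k
    induction k with
    | zero => simp
    | succ k ih =>
      rw [pow_succ, MvPolynomial.totalDegree_mul_of_isDomain (pow_ne_zero _ hq0) hq0, ih]; ring
  rcases Nat.eq_zero_or_pos f.natDegree with h0 | hpos
  · rw [(Polynomial.Monic.natDegree_eq_zero hf).1 h0] at hq; simp at hq
  rw [eval_eq_sum_range, Finset.sum_range_succ, hf.coeff_natDegree, one_mul] at hq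
  have h1 : q ^ f.natDegree = - ∑ i ∈ Finset.range f.natDegree, f.coeff i * q ^ i := by
    linear_combination hq
  have h2 : (q ^ f.natDegree).totalDegree ≤ D + (f.natDegree - 1) * q.totalDegree := by
    rw [h1, MvPolynomial.totalDegree_neg]
    refine MvPolynomial.totalDegree_finsetSum_le fun i hi => ?_
    refine (MvPolynomial.totalDegree_mul _ _).trans ?_
    rw [hpow]
    exact Nat.add_le_add (hc i) (Nat.mul_le_mul_right _ (by have := Finset.mem_range.1 hi; omega))
  rw [hpow] at h2
  obtain ⟨k, hk⟩ := Nat.exists_eq_succ_of_ne_zero hpos.ne'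
  rw [hk] at h2
  simp only [Nat.succ_eq_add_one, Nat.add_sub_cancel, add_mul, one_mul] at h2
  omega

/-- size of an integer root -/
lemma hil_root_size (f : ℤ[X]) (hf : f.Monic) (D : ℕ) (hd : f.natDegree ≤ D) (A : ℤ) (hA : 1 ≤ A)
    (hc : ∀ j, |f.coeff j| ≤ A) (y : ℤ) (hy : f.eval y = 0) : |y| ≤ (D + 1) * A := by
  by_cases h1 : |y| ≤ 1
  · nlinarith
  push Not at h1
  rcases Nat.eq_zero_or_pos f.natDegree with h0 | hpos
  · rw [(Polynomial.Monic.natDegree_eq_zero hf).1 h0] at hy; simp at hy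
  obtain ⟨k, hk⟩ := Nat.exists_eq_succ_of_ne_zero hpos.ne'
  rw [eval_eq_sum_range, Finset.sum_range_succ, hf.coeff_natDegree, one_mul] at hy
  have h2 : |y| ^ (k+1) ≤ (D * A) * |y| ^ k := by
    have : y ^ f.natDegree = - ∑ i ∈ Finset.range f.natDegree, f.coeff i * y ^ i := by
      linear_combination hy
    rw [← abs_pow, ← Nat.succ_eq_add_one, ← hk, this, abs_neg]
    refine (Finset.abs_sum_le_sum_abs _ _).trans ?_
    have : ∀ i ∈ Finset.range f.natDegree, |f.coeff i * y ^ i| ≤ A * |y| ^ k := by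
      intro i hi
      rw [abs_mul, abs_pow]
      refine mul_le_mul (hc i) (pow_le_pow_right₀ h1.le ?_) (by positivity) (by linarith)
      have := Finset.mem_range.1 hi; omega
    refine (Finset.sum_le_card_nsmul _ _ _ this).trans ?_
    simp only [Finset.card_range, nsmul_eq_mul]
    rw [mul_assoc]
    have : (f.natDegree : ℤ) ≤ D := by exact_mod_cast hd
    gcongr
  rw [pow_succ'] at h2
  have := le_of_mul_le_mul_right h2 (by positivity)
  nlinarith

lemma hil_prime_cast {m : ℕ} (p : ℕ) (hp : p.Prime) : Prime ((p : ℕ) : MvPolynomial (Fin m) ℤ) := by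
  have : ((p : ℕ) : MvPolynomial (Fin m) ℤ) = MvPolynomial.C (p : ℤ) := by simp
  rw [this, MvPolynomial.prime_C_iff]
  exact Nat.prime_iff_prime_int.1 hp

lemma hil_det_deg {m : ℕ} {ι : Type*} [Fintype ι] [DecidableEq ι]
    (A : Matrix ι ι (MvPolynomial (Fin m) ℤ)) (D : ℕ) (h : ∀ i j, (A i j).totalDegree ≤ D) :
    A.det.totalDegree ≤ Fintype.card ι * D := by
  rw [Matrix.det_apply]
  refine MvPolynomial.totalDegree_finsetSum_le fun σ _ => ?_
  have h1 : (Equiv.Perm.sign σ • ∏ i, A (σ i) i).totalDegree = (∏ i, A (σ i) i).totalDegree := by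
    rcases Int.units_eq_one_or (Equiv.Perm.sign σ) with h | h <;> simp [h]
  rw [h1]
  refine (MvPolynomial.totalDegree_finsetProd _ _).trans ?_
  refine (Finset.sum_le_card_nsmul _ _ D fun i _ => h _ _).trans ?_
  simp

lemma hil_grid {m : ℕ} (P : MvPolynomial (Fin m) ℤ) (K : ℕ) (hd : P.totalDegree ≤ K)
    (h : ∀ x : Fin m → ℤ, (∀ i, 0 ≤ x i ∧ x i ≤ K) → MvPolynomial.eval x P = 0) : P = 0 := by
  refine MvPolynomial.eq_zero_of_eval_zero_at_prod_finset P (fun _ => Finset.Icc (0:ℤ) K) ?_ ?_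
  · intro i
    have := MvPolynomial.degreeOf_le_totalDegree P i
    simp
    omega
  · intro x hx
    exact h x fun i => by simpa using hx i

lemma hil_class {m : ℕ} (D M L K Yb p : ℕ) (hp : p.Prime)
    (F : (MvPolynomial (Fin m) ℤ)[X][X]) (hF : F.Monic)
    (hd : F.natDegree ≤ D) (hc : ∀ j, (F.coeff j).natDegree ≤ D)
    (hroot : ∀ r : (MvPolynomial (Fin m) ℤ)[X], F.eval r ≠ 0)
    (f : (MvPolynomial (Fin m) ℤ)[X][X]) (T : Finset ℤ) (q : ℤ → MvPolynomial (Fin m) ℤ)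
    (b0 : ℤ) (q0 : MvPolynomial (Fin m) ℤ)
    (hTL : ∀ b ∈ T, |b| ≤ L) (hTb : ∀ b ∈ T, (p : ℤ) ∣ b - b0)
    (hTq : ∀ b ∈ T, (p : MvPolynomial (Fin m) ℤ) ∣ q b - q0)
    (hTf : ∀ b ∈ T, f.evalEval (b : MvPolynomial (Fin m) ℤ) (q b) = 0)
    (hTF : ∀ b ∈ T, F.evalEval (b : MvPolynomial (Fin m) ℤ) (q b) = 0)
    (hTd : ∀ b ∈ T, (q b).totalDegree ≤ D)
    (hTy : ∀ b ∈ T, ∀ x : Fin m → ℤ, (∀ i, 0 ≤ x i ∧ x i ≤ K) → |MvPolynomial.eval x (q b)| ≤ Yb)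
    (hu : ¬ (p : MvPolynomial (Fin m) ℤ) ∣ (derivative f).evalEval (b0 : MvPolynomial (Fin m) ℤ) q0)
    (hK : 2 * M * D ≤ K)
    (hsize : (2 * M).factorial * L ^ (M * (M - 1)) * Yb ^ M < p ^ (M * (2 * M - 1))) :
    T.card ≤ D + D * M + M := by
  classical
  let ι := Fin M ⊕ Fin M
  let w : ι → (MvPolynomial (Fin m) ℤ)[X][X] := Sum.elim (fun k => C (X ^ (k : ℕ))) (fun k => C (X ^ (k : ℕ)) * X)
  let a : T → ι → (MvPolynomial (Fin m) ℤ) := fun b j => (w j).evalEval ((b : ℤ) : (MvPolynomial (Fin m) ℤ)) (q b)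
  have ha1 : ∀ b k, a b (Sum.inl k) = ((b : ℤ) : (MvPolynomial (Fin m) ℤ)) ^ (k : ℕ) := by
    intro b k; simp only [a, w, Sum.elim_inl, evalEval_C, eval_pow, eval_X]
  have ha2 : ∀ b k, a b (Sum.inr k) = ((b : ℤ) : (MvPolynomial (Fin m) ℤ)) ^ (k : ℕ) * q b := by
    intro b k; simp only [a, w, Sum.elim_inr, evalEval_mul, evalEval_C, evalEval_X, eval_pow, eval_X]
  have hcard : Fintype.card ι = 2 * M := by simp [ι]; ring
  have hN : Fintype.card ι * (Fintype.card ι - 1) / 2 = M * (2 * M - 1) := by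
    rw [hcard, mul_assoc, Nat.mul_div_cancel_left _ (by norm_num)]
  have hdet : ∀ β : ι → T, (Matrix.of fun i j => a (β i) j).det = 0 := by
    intro β
    have hdvd := hil_class_dvd (p : (MvPolynomial (Fin m) ℤ)) (hil_prime_cast p hp) f (b0 : (MvPolynomial (Fin m) ℤ)) q0 hu w
      (fun i => ((β i : ℤ) : (MvPolynomial (Fin m) ℤ))) (fun i => q (β i))
      (fun i => by
        have := map_dvd (Int.castRingHom (MvPolynomial (Fin m) ℤ)) (hTb _ (β i).2)
        simpa using this)
      (fun i => hTq _ (β i).2) (fun i => hTf _ (β i).2)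
    rw [hN] at hdvd
    change _ ∣ (Matrix.of fun i j => a (β i) j).det at hdvd
    apply hil_grid _ K
    · refine (hil_det_deg _ D ?_).trans (by rw [hcard]; exact hK)
      intro i j
      have hbk : ∀ (b : ℤ) (k : ℕ), ((b : (MvPolynomial (Fin m) ℤ)) ^ k).totalDegree = 0 := by
        intro b k
        have : (b : (MvPolynomial (Fin m) ℤ)) ^ k = MvPolynomial.C (b ^ k) := by simp
        rw [this]; exact MvPolynomial.totalDegree_C _
      rcases j with k | k
      · rw [Matrix.of_apply, ha1, hbk]; exact Nat.zero_le _
      · rw [Matrix.of_apply, ha2]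
        refine (MvPolynomial.totalDegree_mul _ _).trans ?_
        rw [hbk, zero_add]; exact hTd _ (β i).2
    · intro x hx
      have h1 : (p : ℤ) ^ (M * (2 * M - 1)) ∣
          MvPolynomial.eval x (Matrix.of fun i j => a (β i) j).det := by
        have := map_dvd (MvPolynomial.eval x) hdvd
        simpa using this
      apply Int.eq_zero_of_abs_lt_dvd h1
      rw [RingHom.map_det]
      refine (hil_det_abs _ (Sum.elim (fun k : Fin M => (L : ℤ) ^ (k : ℕ)) (fun k : Fin M => (L : ℤ) ^ (k : ℕ) * Yb)) ?_).trans_lt ?_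
      · intro i j
        have hLb : ∀ k : ℕ, |(β i : ℤ)| ^ k ≤ (L : ℤ) ^ k := fun k =>
          pow_le_pow_left₀ (abs_nonneg _) (hTL _ (β i).2) k
        rcases j with k | k
        · simp only [RingHom.mapMatrix_apply, Matrix.map_apply, Matrix.of_apply, ha1, Sum.elim_inl,
            map_pow, map_intCast, abs_pow]
          exact hLb k
        · simp only [RingHom.mapMatrix_apply, Matrix.map_apply, Matrix.of_apply, ha2, Sum.elim_inr,
            map_pow, map_intCast, abs_pow, map_mul, abs_mul]
          exact mul_le_mul (hLb k) (hTy _ (β i).2 x hx) (abs_nonneg _) (by positivity)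
      · rw [Fintype.prod_sum_type, hcard]
        simp only [Sum.elim_inl, Sum.elim_inr, Finset.prod_mul_distrib, Finset.prod_const,
          Finset.card_univ, Fintype.card_fin, Finset.prod_pow_eq_pow_sum]
        have hs : (∑ i : Fin M, (i : ℕ)) * 2 = M * (M - 1) := by
          rw [Fin.sum_univ_eq_sum_range (fun i => i) M, Finset.sum_range_id_mul_two]
        have : ((2 * M).factorial : ℤ) * ((L : ℤ) ^ (∑ i : Fin M, (i : ℕ)) *
            ((L : ℤ) ^ (∑ i : Fin M, (i : ℕ)) * (Yb : ℤ) ^ M)) =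
            (((2 * M).factorial * L ^ (M * (M - 1)) * Yb ^ M : ℕ) : ℤ) := by
          rw [← hs]; push_cast; ring
        rw [this]
        exact_mod_cast hsize
  obtain ⟨v, hv, hva⟩ := hil_functional a hdet
  let A : (MvPolynomial (Fin m) ℤ)[X] := ∑ k : Fin M, C (v (Sum.inl k)) * X ^ (k : ℕ)
  let B : (MvPolynomial (Fin m) ℤ)[X] := ∑ k : Fin M, C (v (Sum.inr k)) * X ^ (k : ℕ)
  have hdeg : ∀ u : Fin M → (MvPolynomial (Fin m) ℤ), (∑ k : Fin M, C (u k) * X ^ (k : ℕ)).natDegree ≤ M := fun u =>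
    natDegree_sum_le_of_forall_le _ _ fun k _ => (natDegree_C_mul_X_pow_le _ _).trans k.2.le
  have hcoeff : ∀ (u : Fin M → (MvPolynomial (Fin m) ℤ)) (k : Fin M), (∑ k : Fin M, C (u k) * X ^ (k : ℕ)).coeff k = u k := by
    intro u k
    rw [finsetSum_coeff, Finset.sum_eq_single k]
    · simp
    · intro j _ hj
      rw [coeff_C_mul_X_pow, if_neg]
      intro h; exact hj (Fin.ext h.symm)
    · simp
  refine hil_zero_count F hF D M hd hc hroot A B (hdeg _) (hdeg _) ?_ T ?_
  · by_contra hcon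
    push Not at hcon
    apply hv
    ext1 j
    rcases j with k | k
    · rw [← hcoeff (fun k => v (Sum.inl k)) k]; simp only [A] at hcon; rw [hcon.1]; simp
    · rw [← hcoeff (fun k => v (Sum.inr k)) k]; simp only [B] at hcon; rw [hcon.2]; simp
  · intro b hb
    refine ⟨q b, hTF b hb, ?_⟩
    have := hva ⟨b, hb⟩
    rw [Fintype.sum_sum_type] at this
    simp only [ha1, ha2] at this
    rw [← this]
    simp only [A, B, eval_finsetSum, eval_mul, eval_C, eval_pow, eval_X, Finset.mul_sum]
    congr 1
    exact Finset.sum_congr rfl fun k _ => by ring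

lemma hil_growth (a k : ℕ) : ∃ u0 : ℕ, ∀ u, u0 ≤ u → a * u ^ k + a ≤ 2 ^ u := by
  have h := tendsto_pow_const_div_const_pow_of_one_lt k (r := (2:ℝ)) (by norm_num)
  have h2 : ∀ᶠ u : ℕ in Filter.atTop, (u:ℝ) ^ k / 2 ^ u < 1 / (2 * a + 1) :=
    h.eventually (gt_mem_nhds (by positivity))
  obtain ⟨u0, hu0⟩ := Filter.eventually_atTop.1 h2
  refine ⟨max u0 1, fun u hu => ?_⟩
  have h3 := hu0 u (le_trans (le_max_left _ _) hu)
  have hu1 : 1 ≤ u := le_trans (le_max_right _ _) hu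
  rw [div_lt_div_iff₀ (by positivity) (by positivity)] at h3
  have h4 : u ^ k * (2 * a + 1) < 1 * 2 ^ u := by exact_mod_cast h3
  have h5 : 1 ≤ u ^ k := Nat.one_le_pow _ _ hu1
  nlinarith

lemma hil_fibre {m : ℕ} (D N p : ℕ) (hp : p.Prime)
    (f : (MvPolynomial (Fin m) ℤ)[X][X]) (hfd : f.natDegree ≤ D)
    (T : Finset ℤ) (q : ℤ → MvPolynomial (Fin m) ℤ)
    (b0 : ℤ)
    (hTb : ∀ b ∈ T, (p : ℤ) ∣ b - b0)
    (hTf : ∀ b ∈ T, f.evalEval (b : MvPolynomial (Fin m) ℤ) (q b) = 0)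
    (hu : ∀ b ∈ T, ¬ (p : MvPolynomial (Fin m) ℤ) ∣
      (derivative f).evalEval (b : MvPolynomial (Fin m) ℤ) (q b))
    (hN : ∀ T' ⊆ T, ∀ b1 ∈ T', (∀ b ∈ T', (p : ℤ) ∣ b - b1) →
      (∀ b ∈ T', (p : MvPolynomial (Fin m) ℤ) ∣ q b - q b1) → T'.card ≤ N) :
    T.card ≤ N * D := by
  classical
  rcases T.eq_empty_or_nonempty with rfl | ⟨b2, hb2⟩
  · simp
  set I : Ideal (MvPolynomial (Fin m) ℤ) := Ideal.span {(p : MvPolynomial (Fin m) ℤ)} with hI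
  have hprime : I.IsPrime := (Ideal.span_singleton_prime (hil_prime_cast p hp).ne_zero).2
    (hil_prime_cast p hp)
  have hmk : ∀ z, Ideal.Quotient.mk I z = 0 ↔ (p : MvPolynomial (Fin m) ℤ) ∣ z := fun z => by
    rw [Ideal.Quotient.eq_zero_iff_mem, hI, Ideal.mem_span_singleton]
  have hbb : ∀ b ∈ T, Ideal.Quotient.mk I (b : MvPolynomial (Fin m) ℤ) =
      Ideal.Quotient.mk I (b0 : MvPolynomial (Fin m) ℤ) := by
    intro b hb
    rw [← sub_eq_zero, ← map_sub, hmk]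
    have := map_dvd (Int.castRingHom (MvPolynomial (Fin m) ℤ)) (hTb b hb)
    simpa using this
  have hcomp : ∀ b ∈ T, ((Ideal.Quotient.mk I).comp (evalRingHom (b : MvPolynomial (Fin m) ℤ))) =
      ((Ideal.Quotient.mk I).comp (evalRingHom (b0 : MvPolynomial (Fin m) ℤ))) := by
    intro b hb
    ext1
    · ext <;> simp
    · simp only [RingHom.comp_apply, coe_evalRingHom, eval_X]
      exact hbb b hb
  have hev : ∀ (g : (MvPolynomial (Fin m) ℤ)[X][X]), ∀ b ∈ T,
      Ideal.Quotient.mk I (g.evalEval (b : MvPolynomial (Fin m) ℤ) (q b)) =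
      (g.map ((Ideal.Quotient.mk I).comp (evalRingHom (b0 : MvPolynomial (Fin m) ℤ)))).eval
        (Ideal.Quotient.mk I (q b)) := by
    intro g b hb
    rw [hil_evalEval, ← hcomp b hb, ← Polynomial.map_map, eval_map_apply]
  set fb := f.map ((Ideal.Quotient.mk I).comp (evalRingHom (b0 : MvPolynomial (Fin m) ℤ))) with hfb
  have hfb0 : fb ≠ 0 := by
    intro h0
    apply hu b2 hb2
    rw [← hmk, hev _ b2 hb2, ← derivative_map, ← hfb, h0]
    simp
  have himg : T.image (fun b => Ideal.Quotient.mk I (q b)) ⊆ fb.roots.toFinset := by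
    intro z hz
    obtain ⟨b, hb, rfl⟩ := Finset.mem_image.1 hz
    rw [Multiset.mem_toFinset, mem_roots hfb0, IsRoot, hfb, ← hev f b hb, hTf b hb, map_zero]
  have hcard : (T.image (fun b => Ideal.Quotient.mk I (q b))).card ≤ D :=
    (Finset.card_le_card himg).trans ((Multiset.toFinset_card_le _).trans
      ((card_roots' _).trans ((natDegree_map_le).trans hfd)))
  refine (Finset.card_le_mul_card_image T N ?_).trans (Nat.mul_le_mul_left _ hcard)
  intro z hz
  obtain ⟨b1, hb1, rfl⟩ := Finset.mem_image.1 hz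
  refine hN _ (Finset.filter_subset _ _) b1 (by simp [hb1]) ?_ ?_
  · intro b hb
    have h1 := hTb b (Finset.mem_filter.1 hb).1
    have h2 := hTb b1 hb1
    have := dvd_sub h1 h2
    simpa using this
  · intro b hb
    have h1 := (Finset.mem_filter.1 hb).2
    rw [← hmk, map_sub, h1, sub_self]

lemma hil_deriv {S : Type*} [CommRing S] [IsDomain S] [CharZero S] (f : S[X]) (hf : f.Monic) (q : S)
    (hq : f.eval q = 0) :
    ∃ j < f.natDegree, (derivative^[j] f).eval q = 0 ∧ (derivative^[j + 1] f).eval q ≠ 0 := by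
  classical
  have hex : ∃ k, (derivative^[k] f).eval q ≠ 0 := by
    refine ⟨f.natDegree, ?_⟩
    have : derivative^[f.natDegree] f = C ((f.natDegree.factorial : ℕ) : S) := by
      have h1 : (derivative^[f.natDegree] f).natDegree ≤ 0 := by
        simpa using natDegree_iterate_derivative f f.natDegree
      rw [eq_C_of_natDegree_le_zero h1, coeff_iterate_derivative, zero_add, hf.coeff_natDegree,
        Nat.descFactorial_self]
      simp
    rw [this, eval_C]
    exact_mod_cast f.natDegree.factorial_ne_zero
  have hle : Nat.find hex ≤ f.natDegree := by
    apply Nat.find_min'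
    have : derivative^[f.natDegree] f = C ((f.natDegree.factorial : ℕ) : S) := by
      have h1 : (derivative^[f.natDegree] f).natDegree ≤ 0 := by
        simpa using natDegree_iterate_derivative f f.natDegree
      rw [eq_C_of_natDegree_le_zero h1, coeff_iterate_derivative, zero_add, hf.coeff_natDegree,
        Nat.descFactorial_self]
      simp
    rw [this, eval_C]
    exact_mod_cast f.natDegree.factorial_ne_zero
  have hpos : Nat.find hex ≠ 0 := by
    intro h0
    have := Nat.find_spec hex
    rw [h0] at this
    exact this hq
  obtain ⟨j, hj⟩ := Nat.exists_eq_succ_of_ne_zero hpos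
  refine ⟨j, by omega, ?_, ?_⟩
  · have := Nat.find_min hex (m := j) (by omega)
    push Not at this
    exact this
  · have := Nat.find_spec hex
    rw [hj] at this
    exact this

lemma hil_pick {m : ℕ} (h : MvPolynomial (Fin m) ℤ) (h0 : h ≠ 0) (K Z t : ℕ)
    (hd : h.totalDegree ≤ K)
    (hZ : ∀ x : Fin m → ℤ, (∀ i, 0 ≤ x i ∧ x i ≤ K) → |MvPolynomial.eval x h| ≤ Z)
    (hZt : Z < 2 ^ t) (S : Finset ℕ) (hS : S.card = t) (hSp : ∀ p ∈ S, p.Prime) :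
    ∃ p ∈ S, ¬ (p : MvPolynomial (Fin m) ℤ) ∣ h := by
  by_contra hcon
  push Not at hcon
  apply h0
  apply hil_grid h K hd
  intro x hx
  have h1 : ∀ p ∈ S, p ∣ (MvPolynomial.eval x h).natAbs := by
    intro p hp
    have := map_dvd (MvPolynomial.eval x) (hcon p hp)
    rw [map_natCast] at this
    exact Int.natCast_dvd.1 this
  have h2 : ∏ p ∈ S, p ∣ (MvPolynomial.eval x h).natAbs :=
    Finset.prod_primes_dvd _ (fun p hp => (hSp p hp).prime) h1
  have h3 : 2 ^ t ≤ ∏ p ∈ S, p := by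
    rw [← hS]
    exact Finset.pow_card_le_prod _ _ _ fun p hp => (hSp p hp).two_le
  have h4 := hZ x hx
  rw [Int.abs_eq_natAbs] at h4
  have h5 : (MvPolynomial.eval x h).natAbs = 0 := by
    apply Nat.eq_zero_of_dvd_of_lt h2
    omega
  omega

lemma hil_deriv_size (f : ℤ[X]) (D : ℕ) (hd : f.natDegree ≤ D) (A Y : ℕ) (hY : 1 ≤ Y)
    (hA : ∀ j, |f.coeff j| ≤ A) (y : ℤ) (hy : |y| ≤ Y) (k : ℕ) (hk : k ≤ D) :
    |(derivative^[k] f).eval y| ≤ ((D + 1) * (D + 1) ^ D * A * Y ^ D : ℕ) := by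
  have hdeg : (derivative^[k] f).natDegree < D + 1 := by
    have := natDegree_iterate_derivative f k
    omega
  rw [eval_eq_sum_range' hdeg]
  refine (Finset.abs_sum_le_sum_abs _ _).trans ?_
  refine (Finset.sum_le_card_nsmul _ _ (((D + 1) ^ D * A * Y ^ D : ℕ) : ℤ) ?_).trans ?_
  · intro i hi
    have hi : i ≤ D := by simpa [Nat.lt_succ_iff] using hi
    rw [abs_mul, abs_pow, coeff_iterate_derivative]
    have h1 : |y| ^ i ≤ (Y : ℤ) ^ D :=
      (pow_le_pow_left₀ (abs_nonneg _) hy i).trans (pow_le_pow_right₀ (by exact_mod_cast hY) hi)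
    have h2 : |(i + k).descFactorial k • f.coeff (i + k)| ≤ ((D + 1) ^ D * A : ℕ) := by
      by_cases hik : i + k ≤ D
      · rw [nsmul_eq_mul, abs_mul, Nat.abs_cast]
        have h3 : (i + k).descFactorial k ≤ (D + 1) ^ D :=
          (Nat.descFactorial_le_pow _ _).trans ((Nat.pow_le_pow_left (by omega) k).trans
            (Nat.pow_le_pow_right (by omega) hk))
        push_cast
        exact mul_le_mul (by exact_mod_cast h3) (hA _) (abs_nonneg _) (by positivity)
      · rw [coeff_eq_zero_of_natDegree_lt (by omega)]
        simp
    push_cast at h2 ⊢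
    exact mul_le_mul h2 h1 (by positivity) (by positivity)
  · simp; apply le_of_eq; ring

/-- size of the numeric data -/
lemma hil_num1 (D c ℓ H L M K Yb : ℕ) (hℓ : 1 ≤ ℓ) (hH : 1 ≤ H) (hL : 1 ≤ L) (hHL : H * L ≤ 2 ^ ℓ)
    (hM : M = c * ℓ) (hK : K = 2 * M * (D + 1) ^ 2)
    (hYb : Yb = (D + 1) * (H * (L * (K + 1)) ^ D))
    (hc1 : 1 ≤ c)
    (hc : (D + 1) * (3 * c * (D + 1) ^ 2) ^ D ≤ 2 ^ c) :
    Yb ≤ 2 ^ ((c + 2 * D + 1) * ℓ) := by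
  have hK1 : K + 1 ≤ 3 * c * (D + 1) ^ 2 * 2 ^ ℓ := by
    have h1 : ℓ ≤ 2 ^ ℓ := Nat.lt_two_pow_self.le
    have h2 : K + 1 ≤ 3 * c * (D + 1) ^ 2 * ℓ := by
      have : 1 ≤ c * (D + 1) ^ 2 * ℓ := Nat.one_le_iff_ne_zero.2 (by positivity)
      rw [hK, hM]; nlinarith
    exact h2.trans (Nat.mul_le_mul_left _ h1)
  have hHD : H * L ^ D ≤ 2 ^ ((D + 1) * ℓ) := by
    calc H * L ^ D ≤ H * L * (H * L) ^ D := by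
          refine Nat.mul_le_mul (Nat.le_mul_of_pos_right _ hL) (Nat.pow_le_pow_left (Nat.le_mul_of_pos_left _ hH) _)
      _ = (H * L) ^ (D + 1) := by ring
      _ ≤ (2 ^ ℓ) ^ (D + 1) := Nat.pow_le_pow_left hHL _
      _ = _ := by rw [← pow_mul]; ring_nf
  calc Yb = (D + 1) * ((H * L ^ D) * (K + 1) ^ D) := by rw [hYb, mul_pow]; ring
    _ ≤ (D + 1) * (2 ^ ((D + 1) * ℓ) * (3 * c * (D + 1) ^ 2 * 2 ^ ℓ) ^ D) := by
        gcongr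
    _ = ((D + 1) * (3 * c * (D + 1) ^ 2) ^ D) * 2 ^ ((D + 1) * ℓ + ℓ * D) := by
        rw [mul_pow (3 * c * (D + 1) ^ 2), ← pow_mul, pow_add]; ring
    _ ≤ 2 ^ c * 2 ^ ((D + 1) * ℓ + ℓ * D) := Nat.mul_le_mul_right _ hc
    _ = 2 ^ (c + ((D + 1) * ℓ + ℓ * D)) := (pow_add _ _ _).symm
    _ ≤ _ := Nat.pow_le_pow_right (by norm_num) (by nlinarith)

lemma hil_num2 (D c ℓ L M Yb p : ℕ) (hℓ : 1 ≤ ℓ)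
    (hM : M = c * ℓ) (hc1 : 2 * D + 6 ≤ c) (hp : 16 * L ≤ p ^ 2) (hp4 : 4 ≤ p)
    (hY : Yb ≤ 2 ^ ((c + 2 * D + 1) * ℓ)) :
    (2 * M).factorial * L ^ (M * (M - 1)) * Yb ^ M < p ^ (M * (2 * M - 1)) := by
  obtain ⟨N, hN⟩ : ∃ N, M = N + 1 := Nat.exists_eq_add_one.2 (by rw [hM]; apply Nat.mul_pos <;> omega)
  have h1 : (2 * M).factorial ≤ (4 * M ^ 2) ^ M := by
    refine (Nat.factorial_le_pow _).trans (le_of_eq ?_)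
    rw [pow_mul]; ring_nf
  have h2 : 4 * M ^ 2 * L ^ N * Yb < p ^ (2 * M - 1) := by
    have e1 : p ^ (2 * M - 1) = p * (p ^ 2) ^ N := by
      rw [hN, ← pow_mul, ← pow_succ']; congr 1
    have h3 : M ≤ 2 ^ M := Nat.lt_two_pow_self.le
    have h4 : 4 * M ^ 2 * Yb < 4 * 16 ^ N := by
      calc 4 * M ^ 2 * Yb ≤ 4 * (2 ^ M) ^ 2 * 2 ^ ((c + 2 * D + 1) * ℓ) := by gcongr
        _ = 2 ^ (2 + M * 2 + (c + 2 * D + 1) * ℓ) := by rw [pow_add, pow_add, ← pow_mul]; norm_num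
        _ < 2 ^ (2 + 4 * N) := Nat.pow_lt_pow_right (by norm_num) (by
            have : M = c * ℓ := hM
            nlinarith)
        _ = 4 * 16 ^ N := by rw [pow_add, pow_mul]; norm_num
    rcases Nat.eq_zero_or_pos (L ^ N) with h0 | h0
    · rw [h0]; simp only [mul_zero, zero_mul]; positivity
    · calc 4 * M ^ 2 * L ^ N * Yb = (4 * M ^ 2 * Yb) * L ^ N := by ring
        _ < 4 * 16 ^ N * L ^ N := Nat.mul_lt_mul_of_pos_right h4 h0
        _ = 4 * (16 * L) ^ N := by rw [mul_pow]; ring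
        _ ≤ p * (p ^ 2) ^ N := by gcongr
        _ = _ := e1.symm
  calc (2 * M).factorial * L ^ (M * (M - 1)) * Yb ^ M ≤ (4 * M ^ 2) ^ M * L ^ (M * (M - 1)) * Yb ^ M := by
        gcongr
    _ = (4 * M ^ 2 * L ^ N * Yb) ^ M := by
        have : M * (M - 1) = N * M := by rw [hN]; simp; ring
        rw [this, pow_mul, ← mul_pow, ← mul_pow]
    _ < (p ^ (2 * M - 1)) ^ M := Nat.pow_lt_pow_left h2 (by omega)
    _ = _ := by rw [← pow_mul]; ring_nf

lemma hil_num3 (c1 : ℕ) : ∃ c2 : ℕ, 1 ≤ c2 ∧ ∀ ℓ s : ℕ, 1 ≤ ℓ → s ≤ 2 ^ ℓ →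
    (c2 * ℓ) * (4 * (s + 1) + c1 * ℓ + 1) + 1 ≤ 2 ^ (c2 * ℓ) := by
  obtain ⟨u0, hu⟩ := hil_growth (4 * (c1 + 9)) 1
  refine ⟨max u0 2, by omega, fun ℓ s hℓ hs => ?_⟩
  set c2 := max u0 2
  have h1 := hu c2 (le_max_left _ _)
  have h2 : 2 ≤ c2 := le_max_right _ _
  have h3 : ℓ ≤ 2 ^ ℓ := Nat.lt_two_pow_self.le
  have h4 : 1 ≤ 2 ^ ℓ := Nat.one_le_two_pow
  calc (c2 * ℓ) * (4 * (s + 1) + c1 * ℓ + 1) + 1 ≤ (c2 * 2 ^ ℓ) * ((c1 + 9) * 2 ^ ℓ) + 1 := by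
        have : 4 * (s + 1) + c1 * ℓ + 1 ≤ (c1 + 9) * 2 ^ ℓ := by nlinarith
        gcongr
    _ ≤ ((c1 + 9) * c2 + (c1 + 9)) * (2 ^ ℓ * 2 ^ ℓ) := by
        have : 1 ≤ 2 ^ ℓ * 2 ^ ℓ := Nat.one_le_iff_ne_zero.2 (by positivity)
        nlinarith
    _ ≤ 2 ^ (c2 - 2) * (2 ^ ℓ * 2 ^ ℓ) := by
        gcongr
        have : 2 ^ c2 = 2 ^ (c2 - 2) * 4 := by
          rw [show (4:ℕ) = 2 ^ 2 by norm_num, ← pow_add]; congr 1; omega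
        rw [pow_one] at h1
        nlinarith
    _ = 2 ^ (c2 - 2 + (ℓ + ℓ)) := by rw [pow_add, pow_add]
    _ ≤ 2 ^ (c2 * ℓ) := Nat.pow_le_pow_right (by norm_num) (by
        obtain ⟨k, hk⟩ := Nat.exists_eq_add_of_le h2
        have : c2 - 2 = k := by omega
        rw [this, hk]; nlinarith)

/-- consistency of specializations -/
lemma hil_spec {m : ℕ} (F : (MvPolynomial (Fin m) ℤ)[X][X]) (b q : MvPolynomial (Fin m) ℤ)
    (x : Fin m → ℤ) (k : ℕ) :
    MvPolynomial.eval x ((derivative^[k] F).evalEval b q) =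
      (derivative^[k] ((F.map (evalRingHom b)).map (MvPolynomial.eval x))).eval
        (MvPolynomial.eval x q) := by
  rw [iterate_derivative_map, iterate_derivative_map, eval_map_apply, hil_evalEval]

lemma hil_intcast_eval {m : ℕ} (g : (MvPolynomial (Fin m) ℤ)[X]) (D : ℕ)
    (hg : ∀ k, (g.coeff k).totalDegree ≤ D) (b : ℤ) :
    (g.eval (b : MvPolynomial (Fin m) ℤ)).totalDegree ≤ D := by
  rw [eval_eq_sum_range]
  refine MvPolynomial.totalDegree_finsetSum_le fun i _ => ?_
  refine (MvPolynomial.totalDegree_mul _ _).trans ?_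
  have : (b : MvPolynomial (Fin m) ℤ) ^ i = MvPolynomial.C (b ^ i) := by simp
  rw [this, MvPolynomial.totalDegree_C, add_zero]
  exact hg i

lemma hil_deg_eval {m : ℕ} (f : (MvPolynomial (Fin m) ℤ)[X]) (D E: ℕ) (hd : f.natDegree ≤ D)
    (hf : ∀ k, (f.coeff k).totalDegree ≤ E) (q : MvPolynomial (Fin m) ℤ) (hq : q.totalDegree ≤ E) :
    (f.eval q).totalDegree ≤ E + D * E := by
  rw [eval_eq_sum_range]
  refine MvPolynomial.totalDegree_finsetSum_le fun i hi => ?_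
  refine (MvPolynomial.totalDegree_mul _ _).trans ?_
  refine Nat.add_le_add (hf i) ((MvPolynomial.totalDegree_pow _ _).trans ?_)
  have : i < f.natDegree + 1 := Finset.mem_range.1 hi
  exact Nat.mul_le_mul (by omega) hq

lemma hil_deriv_deg {m : ℕ} (f : (MvPolynomial (Fin m) ℤ)[X]) (D : ℕ)
    (hf : ∀ k, (f.coeff k).totalDegree ≤ D) (j k : ℕ) :
    ((derivative^[j] f).coeff k).totalDegree ≤ D := by
  rw [coeff_iterate_derivative]
  refine (MvPolynomial.totalDegree_smul_le _ _).trans (hf _)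

set_option maxHeartbeats 1000000 in
lemma hil_curve (D : ℕ) : ∃ C : ℕ, ∀ (m : ℕ) (F : (MvPolynomial (Fin m) ℤ)[X][X]), F.Monic →
    F.natDegree ≤ D → (∀ j, (F.coeff j).natDegree ≤ D) →
    (∀ j k, ((F.coeff j).coeff k).totalDegree ≤ D) →
    (∀ r : (MvPolynomial (Fin m) ℤ)[X], F.eval r ≠ 0) →
    ∀ H L ℓ : ℕ, 1 ≤ H → 1 ≤ L → 1 ≤ ℓ → H * L ≤ 2 ^ ℓ →
    (∀ T : ℕ, 1 ≤ T → ∀ b : ℤ, |b| ≤ T → ∀ x : Fin m → ℤ, (∀ i, |x i| ≤ T) → ∀ j,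
      |MvPolynomial.eval x ((F.coeff j).eval (b : MvPolynomial (Fin m) ℤ))| ≤ (H : ℤ) * (T : ℤ) ^ D) →
    ∀ S : Finset ℤ, (∀ b ∈ S, |b| ≤ L) →
    (∀ b ∈ S, ∃ q : MvPolynomial (Fin m) ℤ, F.evalEval (b : MvPolynomial (Fin m) ℤ) q = 0) →
    S.card ≤ C * ℓ ^ 4 * (Nat.sqrt L + 1) := by
  classical
  obtain ⟨c, hcD, hc⟩ : ∃ c, 2 * D + 6 ≤ c ∧ (D + 1) * (3 * c * (D + 1) ^ 2) ^ D ≤ 2 ^ c := by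
    obtain ⟨u0, hu⟩ := hil_growth ((D + 1) * (3 * (D + 1) ^ 2) ^ D) D
    refine ⟨max u0 (2 * D + 6), le_max_right _ _, ?_⟩
    have := hu _ (le_max_left u0 (2 * D + 6))
    refine le_trans (le_of_eq ?_) ((Nat.le_add_right _ _).trans this)
    rw [show 3 * max u0 (2 * D + 6) * (D + 1) ^ 2 = (3 * (D + 1) ^ 2) * max u0 (2 * D + 6) by ring, mul_pow,
      mul_assoc]
  obtain ⟨c1, hc1⟩ : ∃ c1, c1 = (D + 1) * (c + 3 * D + 1) + 1 := ⟨_, rfl⟩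
  obtain ⟨c2, hc2, hnum3⟩ := hil_num3 c1
  refine ⟨c1 * D * (c2 * (5 + c1) + 1) * (D + D * c + c) * D, ?_⟩
  intro m F hF hd hcn hct hroot H L ℓ hH hL hℓ hHL hht S hSL hSq
  obtain ⟨M, hM⟩ : ∃ M, M = c * ℓ := ⟨_, rfl⟩
  obtain ⟨K, hK⟩ : ∃ K, K = 2 * M * (D + 1) ^ 2 := ⟨_, rfl⟩
  obtain ⟨A, hA⟩ : ∃ A, A = H * (L * (K + 1)) ^ D := ⟨_, rfl⟩
  obtain ⟨Yb, hYb⟩ : ∃ Yb, Yb = (D + 1) * A := ⟨_, rfl⟩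
  have hA1 : 1 ≤ A := by rw [hA]; exact Nat.one_le_iff_ne_zero.2 (by positivity)
  have hYb1 : 1 ≤ Yb := by rw [hYb]; exact Nat.one_le_iff_ne_zero.2 (by positivity)
  have hM1 : 1 ≤ M := by rw [hM]; exact Nat.mul_pos (by omega) (by omega)
  have hYle := hil_num1 D c ℓ H L M K Yb hℓ hH hL hHL hM hK (by rw [hYb, hA]) (by omega) hc
  obtain ⟨s, hs⟩ : ∃ s, s = Nat.sqrt L := ⟨_, rfl⟩
  have hL2 : L ≤ 2 ^ ℓ := (Nat.le_mul_of_pos_left _ hH).trans hHL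
  have hs2 : s ≤ 2 ^ ℓ := by rw [hs]; exact (Nat.sqrt_le_self L).trans hL2
  obtain ⟨Sp, hSpc, hSp⟩ := hil_primes (4 * (s + 1)) (c1 * ℓ) (c2 * ℓ) (hnum3 ℓ s hℓ hs2)
    (Nat.mul_pos (by omega) (by omega))
  obtain ⟨Xb, hXb⟩ : ∃ Xb, Xb = (c2 * ℓ) * (4 * (s + 1) + c1 * ℓ + 1) := ⟨_, rfl⟩
  rw [← hXb] at hSp
  have hZ2 : (D + 1) * (D + 1) ^ D * A * Yb ^ D < 2 ^ (c1 * ℓ) := by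
    have hD2 : D + 1 ≤ 2 ^ D := Nat.lt_two_pow_self
    have hAY : A ≤ Yb := by rw [hYb]; exact Nat.le_mul_of_pos_left _ (by omega)
    have hexp : (D + (c + 2 * D + 1) * ℓ) * (D + 1) < c1 * ℓ := by
      have h1 : D + (c + 2 * D + 1) * ℓ ≤ (c + 3 * D + 1) * ℓ := by
        have : D ≤ D * ℓ := Nat.le_mul_of_pos_right _ hℓ
        linarith
      have h2 := Nat.mul_le_mul_right (D + 1) h1
      rw [hc1]
      calc _ ≤ _ := h2
        _ < (c + 3 * D + 1) * ℓ * (D + 1) + ℓ := by omega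
        _ = _ := by ring
    calc (D + 1) * (D + 1) ^ D * A * Yb ^ D ≤ (D + 1) * (D + 1) ^ D * Yb * Yb ^ D :=
          Nat.mul_le_mul_right _ (Nat.mul_le_mul_left _ hAY)
      _ = ((D + 1) * Yb) ^ (D + 1) := by rw [mul_pow, pow_succ, pow_succ]; ring
      _ ≤ (2 ^ D * 2 ^ ((c + 2 * D + 1) * ℓ)) ^ (D + 1) :=
          Nat.pow_le_pow_left (Nat.mul_le_mul hD2 hYle) _
      _ = 2 ^ ((D + (c + 2 * D + 1) * ℓ) * (D + 1)) := by rw [← pow_add, ← pow_mul]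
      _ < 2 ^ (c1 * ℓ) := Nat.pow_lt_pow_right (by norm_num) hexp
  have hDD : D ≤ (D + 1) ^ 2 := by nlinarith
  have hDK : D + D * D ≤ K := by
    rw [hK]
    calc D + D * D ≤ 2 * (D + 1) ^ 2 := by nlinarith
      _ ≤ _ := Nat.mul_le_mul_right _ (by omega)
  -- choose roots
  have hq' : ∀ b : ℤ, ∃ q : MvPolynomial (Fin m) ℤ, b ∈ S → F.evalEval (b : MvPolynomial (Fin m) ℤ) q = 0 := by
    intro b
    by_cases hb : b ∈ S
    · obtain ⟨q, hq⟩ := hSq b hb; exact ⟨q, fun _ => hq⟩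
    · exact ⟨0, fun h => absurd h hb⟩
  choose q hq using hq'
  have hFb : ∀ b : ℤ, (F.map (evalRingHom (b : MvPolynomial (Fin m) ℤ))).Monic := fun b => hF.map _
  have hFbd : ∀ b : ℤ, (F.map (evalRingHom (b : MvPolynomial (Fin m) ℤ))).natDegree ≤ D :=
    fun b => natDegree_map_le.trans hd
  have hFbt : ∀ (b : ℤ) j, ((F.map (evalRingHom (b : MvPolynomial (Fin m) ℤ))).coeff j).totalDegree ≤ D := by
    intro b j
    rw [coeff_map, coe_evalRingHom]
    exact hil_intcast_eval _ D (hct j) b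
  have hqd : ∀ b ∈ S, (q b).totalDegree ≤ D := by
    intro b hb
    refine hil_totalDegree_root _ (hFb b) D (hFbt b) _ ?_
    rw [← hil_evalEval]; exact hq b hb
  have hgridc : ∀ b ∈ S, ∀ x : Fin m → ℤ, (∀ i, 0 ≤ x i ∧ x i ≤ K) → ∀ j,
      |((F.map (evalRingHom (b : MvPolynomial (Fin m) ℤ))).map (MvPolynomial.eval x)).coeff j| ≤ (A : ℤ) := by
    intro b hb x hx j
    rw [coeff_map, coeff_map, coe_evalRingHom]
    have := hht (L * (K + 1)) (Nat.mul_pos hL (by omega)) b ?_ x ?_ j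
    · rw [hA]; push_cast at this ⊢; exact this
    · refine (hSL b hb).trans ?_
      exact_mod_cast Nat.le_mul_of_pos_right L (by omega)
    · intro i
      have h1 := hx i
      rw [abs_of_nonneg h1.1]
      refine h1.2.trans ?_
      have : K ≤ L * (K + 1) := by nlinarith
      exact_mod_cast this
  have hqy : ∀ b ∈ S, ∀ x : Fin m → ℤ, (∀ i, 0 ≤ x i ∧ x i ≤ K) →
      |MvPolynomial.eval x (q b)| ≤ Yb := by
    intro b hb x hx
    rw [hYb]; push_cast
    refine hil_root_size _ ((hFb b).map (MvPolynomial.eval x)) D (natDegree_map_le.trans (hFbd b)) A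
      (by exact_mod_cast hA1) (hgridc b hb x hx) _ ?_
    have := hil_spec F (b : MvPolynomial (Fin m) ℤ) (q b) x 0
    simp only [Function.iterate_zero, id_eq] at this
    rw [← this, hq b hb, map_zero]
  -- choose derivative order and prime
  have hj' : ∀ b : ℤ, ∃ (j : ℕ) (p : ℕ), b ∈ S → j < D ∧ p ∈ Sp ∧
      (derivative^[j] F).evalEval (b : MvPolynomial (Fin m) ℤ) (q b) = 0 ∧
      ¬ (p : MvPolynomial (Fin m) ℤ) ∣ (derivative^[j + 1] F).evalEval (b : MvPolynomial (Fin m) ℤ) (q b) := by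
    intro b
    by_cases hb : b ∈ S
    swap
    · exact ⟨0, 0, fun h => absurd h hb⟩
    obtain ⟨j, hj, hj0, hj1⟩ := hil_deriv (F.map (evalRingHom (b : MvPolynomial (Fin m) ℤ))) (hFb b) (q b)
      (by rw [← hil_evalEval]; exact hq b hb)
    have hjD : j < D := hj.trans_le (hFbd b)
    have hdeg : ((derivative^[j + 1] F).evalEval (b : MvPolynomial (Fin m) ℤ) (q b)).totalDegree ≤ K := by
      rw [hil_evalEval, ← iterate_derivative_map]
      refine (hil_deg_eval _ D D ?_ ?_ (q b) (hqd b hb)).trans ?_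
      · exact (natDegree_iterate_derivative _ _).trans ((Nat.sub_le _ _).trans (hFbd b))
      · exact hil_deriv_deg _ D (hFbt b) _
      · exact hDK
    have hZ1 : ∀ x : Fin m → ℤ, (∀ i, 0 ≤ x i ∧ x i ≤ K) →
        |MvPolynomial.eval x ((derivative^[j + 1] F).evalEval (b : MvPolynomial (Fin m) ℤ) (q b))| ≤
          (((D + 1) * (D + 1) ^ D * A * Yb ^ D : ℕ) : ℤ) := by
      intro x hx
      rw [hil_spec]
      exact hil_deriv_size _ D (natDegree_map_le.trans (hFbd b)) A Yb hYb1 (hgridc b hb x hx) _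
        (hqy b hb x hx) (j + 1) hjD
    obtain ⟨p, hp, hpd⟩ := hil_pick ((derivative^[j + 1] F).evalEval (b : MvPolynomial (Fin m) ℤ) (q b))
      (by rw [hil_evalEval, ← iterate_derivative_map]; exact hj1) K
      ((D + 1) * (D + 1) ^ D * A * Yb ^ D) (c1 * ℓ) hdeg hZ1 hZ2 Sp hSpc (fun p hp => (hSp p hp).1)
    refine ⟨j, p, fun _ => ⟨hjD, hp, ?_, hpd⟩⟩
    rw [hil_evalEval, ← iterate_derivative_map]; exact hj0
  choose j p hjp using hj'
  let φ : ℤ → ℕ × ℕ × ℕ := fun b => (p b, j b, (b % (p b : ℤ)).toNat)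
  have hφ : S.image φ ⊆ Sp ×ˢ (Finset.range D ×ˢ Finset.range (Xb + 1)) := by
    intro z hz
    obtain ⟨b, hb, rfl⟩ := Finset.mem_image.1 hz
    obtain ⟨h1, h2, h3, h4⟩ := hjp b hb
    have hpp := hSp _ h2
    simp only [φ, Finset.mem_product, Finset.mem_range]
    refine ⟨h2, h1, ?_⟩
    have := Int.emod_lt_of_pos b (by exact_mod_cast hpp.1.pos : (0:ℤ) < p b)
    omega
  have hcardφ : (S.image φ).card ≤ c1 * ℓ * (D * (Xb + 1)) := by
    refine (Finset.card_le_card hφ).trans (le_of_eq ?_)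
    simp [hSpc]
  have hfib : ∀ z ∈ S.image φ, (S.filter (fun b => φ b = z)).card ≤ (D + D * M + M) * D := by
    intro z hz
    obtain ⟨b0, hb0, rfl⟩ := Finset.mem_image.1 hz
    obtain ⟨h1, h2, h3, h4⟩ := hjp b0 hb0
    have hpp := hSp _ h2
    have hmem : ∀ b ∈ S.filter (fun b => φ b = φ b0), b ∈ S ∧ p b = p b0 ∧ j b = j b0 ∧
        (p b0 : ℤ) ∣ b - b0 := by
      intro b hb
      obtain ⟨hb, he⟩ := Finset.mem_filter.1 hb
      simp only [φ, Prod.mk.injEq] at he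
      refine ⟨hb, he.1, he.2.1, ?_⟩
      have he3 := he.2.2
      rw [he.1] at he3
      have hp0 : (0:ℤ) < p b0 := by exact_mod_cast hpp.1.pos
      have e1 := Int.emod_nonneg b hp0.ne'
      have e2 := Int.emod_nonneg b0 hp0.ne'
      exact Int.ModEq.dvd (show b0 % _ = b % _ by omega)
    refine hil_fibre D (D + D * M + M) (p b0) hpp.1 (derivative^[j b0] F)
      ((natDegree_iterate_derivative _ _).trans ((Nat.sub_le _ _).trans hd)) _ q b0
      (fun b hb => (hmem b hb).2.2.2) ?_ ?_ ?_
    · intro b hb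
      obtain ⟨g1, g2, g3, g4⟩ := hmem b hb
      rw [← g3]; exact (hjp b g1).2.2.1
    · intro b hb
      obtain ⟨g1, g2, g3, g4⟩ := hmem b hb
      rw [← g3, ← g2, ← Function.iterate_succ_apply' derivative]; exact (hjp b g1).2.2.2
    · intro T' hT' b1 hb1 hTb hTq
      obtain ⟨g1, g2, g3, g4⟩ := hmem b1 (hT' hb1)
      refine hil_class D M L K Yb (p b0) hpp.1 F hF hd hcn hroot (derivative^[j b0] F) T' q b1 (q b1)
        (fun b hb => hSL b (hmem b (hT' hb)).1) hTb hTq ?_ (fun b hb => hq b (hmem b (hT' hb)).1)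
        (fun b hb => hqd b (hmem b (hT' hb)).1) (fun b hb => hqy b (hmem b (hT' hb)).1) ?_ ?_ ?_
      · intro b hb
        obtain ⟨g1, g2, g3, g4⟩ := hmem b (hT' hb)
        rw [← g3]; exact (hjp b g1).2.2.1
      · rw [← g3, ← g2, ← Function.iterate_succ_apply' derivative]; exact (hjp b1 g1).2.2.2
      · rw [hK]; exact Nat.mul_le_mul_left _ hDD
      · refine hil_num2 D c ℓ L M Yb (p b0) hℓ hM hcD ?_ ?_ hYle
        · have : L < (s + 1) * (s + 1) := by rw [hs]; exact Nat.lt_succ_sqrt L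
          have h9 : (4 * (s + 1)) ^ 2 ≤ p b0 ^ 2 := Nat.pow_le_pow_left hpp.2.1 2
          have h10 : (4 * (s + 1)) ^ 2 = 16 * ((s + 1) * (s + 1)) := by ring
          omega
        · have := hpp.2.1; omega
  have hfin := (Finset.card_le_mul_card_image S _ hfib).trans (Nat.mul_le_mul_left _ hcardφ)
  refine hfin.trans ?_
  rw [← hs]
  have hX1 : Xb + 1 ≤ (c2 * (5 + c1) + 1) * (ℓ ^ 2 * (s + 1)) := by
    have e1 : 4 * (s + 1) + c1 * ℓ + 1 ≤ (5 + c1) * (ℓ * (s + 1)) := by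
      have : s + 1 ≤ ℓ * (s + 1) := Nat.le_mul_of_pos_left _ (by omega)
      have : ℓ ≤ ℓ * (s + 1) := Nat.le_mul_of_pos_right _ (by omega)
      nlinarith
    have e2 : 1 ≤ ℓ ^ 2 * (s + 1) := Nat.one_le_iff_ne_zero.2 (by positivity)
    calc Xb + 1 ≤ (c2 * ℓ) * ((5 + c1) * (ℓ * (s + 1))) + ℓ ^ 2 * (s + 1) := by
          rw [hXb]; gcongr
      _ = _ := by ring
  have hN : D + D * M + M ≤ (D + D * c + c) * ℓ := by
    rw [hM]; nlinarith
  calc (D + D * M + M) * D * (c1 * ℓ * (D * (Xb + 1)))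
      ≤ (D + D * c + c) * ℓ * D * (c1 * ℓ * (D * ((c2 * (5 + c1) + 1) * (ℓ ^ 2 * (s + 1))))) := by gcongr
    _ = _ := by ring

lemma hil_fs_eval {n : ℕ} (g : MvPolynomial (Fin (n + 1)) ℤ) (b : ℤ) (a : Fin n → ℤ) :
    MvPolynomial.eval a ((MvPolynomial.finSuccEquiv ℤ n g).eval (b : MvPolynomial (Fin n) ℤ)) =
      MvPolynomial.eval (Fin.cons b a) g := by
  rw [MvPolynomial.eval_eq_eval_mv_eval']
  rw [← eval_map_apply, map_intCast]
  simp

lemma hil_fs_deg {n : ℕ} (g : MvPolynomial (Fin (n + 1)) ℤ) (k : ℕ) :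
    ((MvPolynomial.finSuccEquiv ℤ n g).coeff k).totalDegree ≤ g.totalDegree := by
  by_cases h : (MvPolynomial.finSuccEquiv ℤ n g).coeff k = 0
  · rw [h]; simp
  · have := MvPolynomial.totalDegree_coeff_finSuccEquiv_add_le g k h
    omega

lemma hil_fs_nat {n : ℕ} (g : MvPolynomial (Fin (n + 1)) ℤ) :
    (MvPolynomial.finSuccEquiv ℤ n g).natDegree ≤ g.totalDegree := by
  rw [MvPolynomial.natDegree_finSuccEquiv]
  exact MvPolynomial.degreeOf_le_totalDegree _ _

/-- specialization map to zero variables -/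
def hilPsi {n : ℕ} (a : Fin n → ℤ) : MvPolynomial (Fin n) ℤ →+* MvPolynomial (Fin 0) ℤ :=
  MvPolynomial.C.comp (MvPolynomial.eval a)

lemma hil_psi_eval {n : ℕ} (a : Fin n → ℤ) (b : ℤ) (x : Fin 0 → ℤ) :
    ((MvPolynomial.eval x).comp (evalRingHom (b : MvPolynomial (Fin 0) ℤ))).comp
      (mapRingHom (hilPsi a)) =
    (MvPolynomial.eval a).comp (evalRingHom (b : MvPolynomial (Fin n) ℤ)) := by
  apply Polynomial.ringHom_ext
  · intro c; simp [hilPsi]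
  · simp

lemma hil_psi_map {n : ℕ} (a : Fin n → ℤ) (b : ℤ) :
    (evalRingHom (b : MvPolynomial (Fin 0) ℤ)).comp (mapRingHom (hilPsi a)) =
    (hilPsi a).comp (evalRingHom (b : MvPolynomial (Fin n) ℤ)) := by
  apply Polynomial.ringHom_ext
  · intro c; simp
  · simp

lemma hil_choose (C : ℕ) : ∃ c : ℕ, ∀ ℓ : ℕ, 1 ≤ ℓ → ∃ L0 : ℕ, 1 ≤ L0 ∧ 2 ^ ℓ * L0 ≤ 2 ^ (c * ℓ) ∧
    C * (c * ℓ) ^ 4 * (Nat.sqrt L0 + 1) < L0 + 1 := by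
  obtain ⟨u0, hu⟩ := hil_growth (2 ^ 9 * (2 * C + 1) ^ 2) 8
  refine ⟨max u0 1, fun ℓ hℓ => ?_⟩
  set c := max u0 1
  have hc1 : 1 ≤ c := le_max_right _ _
  have hc := hu c (le_max_left _ _)
  obtain ⟨k, hk⟩ : ∃ k, k = 2 * C * (c * ℓ) ^ 4 + 1 := ⟨_, rfl⟩
  refine ⟨k * k, Nat.mul_pos (by omega) (by omega), ?_, ?_⟩
  · have h1 : ℓ ≤ 2 ^ ℓ := Nat.lt_two_pow_self.le
    have hc9 : 9 ≤ c := by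
      have : 2 ^ 9 ≤ 2 ^ c := by
        refine le_trans ?_ hc
        have h2 : 1 ≤ (2 * C + 1) ^ 2 := Nat.one_le_pow _ _ (by omega)
        have h3 : 1 ≤ c ^ 8 := Nat.one_le_pow _ _ hc1
        nlinarith
      exact (Nat.pow_le_pow_iff_right (by norm_num)).1 this
    have hkle : k ≤ (2 * C + 1) * c ^ 4 * (2 ^ ℓ) ^ 4 := by
      have h3 : 1 ≤ c ^ 4 * (2 ^ ℓ) ^ 4 := Nat.one_le_iff_ne_zero.2 (by positivity)
      have h4 : (c * ℓ) ^ 4 ≤ c ^ 4 * (2 ^ ℓ) ^ 4 := by rw [mul_pow]; gcongr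
      rw [hk]; nlinarith
    have hcc : (2 * C + 1) ^ 2 * c ^ 8 ≤ 2 ^ (c - 9) := by
      have : 2 ^ c = 2 ^ 9 * 2 ^ (c - 9) := by rw [← pow_add]; congr 1; omega
      rw [this] at hc
      have : 2 ^ 9 * ((2 * C + 1) ^ 2 * c ^ 8) ≤ 2 ^ 9 * 2 ^ (c - 9) := by
        rw [← mul_assoc]; omega
      exact Nat.le_of_mul_le_mul_left this (by positivity)
    calc 2 ^ ℓ * (k * k) ≤ 2 ^ ℓ * (((2 * C + 1) * c ^ 4 * (2 ^ ℓ) ^ 4) * ((2 * C + 1) * c ^ 4 * (2 ^ ℓ) ^ 4)) := by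
          gcongr
      _ = ((2 * C + 1) ^ 2 * c ^ 8) * (2 ^ ℓ) ^ 9 := by ring
      _ ≤ 2 ^ (c - 9) * (2 ^ ℓ) ^ 9 := Nat.mul_le_mul_right _ hcc
      _ = 2 ^ (c - 9 + ℓ * 9) := by rw [← pow_mul, ← pow_add]
      _ ≤ 2 ^ (c * ℓ) := Nat.pow_le_pow_right (by norm_num) (by
          obtain ⟨d, hd⟩ := Nat.exists_eq_add_of_le hc9
          have : c - 9 = d := by omega
          rw [this, hd]; nlinarith)
  · rw [Nat.sqrt_eq]
    nlinarith

def HilP (n : ℕ) : Prop := ∀ D : ℕ, ∃ C : ℕ, ∀ G : (MvPolynomial (Fin n) ℤ)[X], G.Monic →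
    (∀ r, G.eval r ≠ 0) → G.natDegree ≤ D → (∀ j, (G.coeff j).totalDegree ≤ D) →
    ∀ H L ℓ : ℕ, 1 ≤ H → 1 ≤ L → 1 ≤ ℓ → H * L ≤ 2 ^ ℓ →
    (∀ T : ℕ, 1 ≤ T → ∀ x : Fin n → ℤ, (∀ i, |x i| ≤ T) → ∀ j,
      |MvPolynomial.eval x (G.coeff j)| ≤ (H : ℤ) * (T : ℤ) ^ D) →
    ∀ S : Finset (Fin n → ℤ), (∀ x ∈ S, (∀ i, |x i| ≤ L) ∧
      ∃ y : ℤ, (G.map (MvPolynomial.eval x)).eval y = 0) →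
    S.card * L ≤ C * ℓ ^ 4 * L ^ n * (Nat.sqrt L + 1)

lemma hilP_zero : HilP 0 := by
  intro D
  refine ⟨0, ?_⟩
  intro G hG hroot hd ht H L ℓ hH hL hℓ hHL hht S hS
  have : S = ∅ := by
    rw [Finset.eq_empty_iff_forall_notMem]
    intro x hx
    obtain ⟨-, y, hy⟩ := hS x hx
    apply hroot (MvPolynomial.C y)
    have h1 : (MvPolynomial.C : ℤ →+* MvPolynomial (Fin 0) ℤ).comp (MvPolynomial.eval x) = RingHom.id _ := by
      apply MvPolynomial.ringHom_ext
      · intro c; simp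
      · intro i; exact i.elim0
    have h2 : (G.map (MvPolynomial.eval x)).map (MvPolynomial.C : ℤ →+* MvPolynomial (Fin 0) ℤ) = G := by
      rw [Polynomial.map_map, h1, Polynomial.map_id]
    rw [← h2, eval_map_apply, hy, map_zero]
  rw [this]; simp

set_option maxHeartbeats 1000000 in
lemma hilP_succ (n : ℕ) (ih : HilP n) : HilP (n + 1) := by
  classical
  intro D
  obtain ⟨Cc, hcurve⟩ := hil_curve D
  obtain ⟨c, hch⟩ := hil_choose Cc
  obtain ⟨Cn, hCn⟩ := ih D
  refine ⟨3 * Cn * (1 + c * D) ^ 4 + 3 ^ n * Cc * (D + 1) ^ 4, ?_⟩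
  intro G hG hroot hd ht H L ℓ hH hL hℓ hHL hht S hS
  obtain ⟨F, hFdef⟩ : ∃ F, F = G.map ((MvPolynomial.finSuccEquiv ℤ n : _ ≃ₐ[ℤ] _) : MvPolynomial (Fin (n+1)) ℤ →+* (MvPolynomial (Fin n) ℤ)[X]) := ⟨_, rfl⟩
  have hFc : ∀ j, F.coeff j = MvPolynomial.finSuccEquiv ℤ n (G.coeff j) := by
    intro j; rw [hFdef, coeff_map]; rfl
  have hFm : F.Monic := by rw [hFdef]; exact hG.map _
  have hFd : F.natDegree ≤ D := by rw [hFdef]; exact natDegree_map_le.trans hd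
  have hFn : ∀ j, (F.coeff j).natDegree ≤ D := fun j => by
    rw [hFc]; exact (hil_fs_nat _).trans (ht j)
  have hFt : ∀ j k, ((F.coeff j).coeff k).totalDegree ≤ D := fun j k => by
    rw [hFc]; exact (hil_fs_deg _ k).trans (ht j)
  have hFroot : ∀ r, F.eval r ≠ 0 := by
    intro r hr
    obtain ⟨g, rfl⟩ := (MvPolynomial.finSuccEquiv ℤ n).surjective r
    apply hroot g
    apply (MvPolynomial.finSuccEquiv ℤ n).injective
    rw [map_zero, ← hr, hFdef]
    exact (eval_map_apply (p := G) ((MvPolynomial.finSuccEquiv ℤ n : _ ≃ₐ[ℤ] _) : MvPolynomial (Fin (n+1)) ℤ →+* (MvPolynomial (Fin n) ℤ)[X]) g).symm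
  have hFe : ∀ (b : ℤ) (a : Fin n → ℤ), (F.map (evalRingHom (b : MvPolynomial (Fin n) ℤ))).map (MvPolynomial.eval a) =
      G.map (MvPolynomial.eval (Fin.cons b a : Fin (n + 1) → ℤ)) := by
    intro b a
    ext j
    rw [coeff_map, coeff_map, coeff_map, coe_evalRingHom, hFc, hil_fs_eval]
  have hFh : ∀ (b : ℤ) (a : Fin n → ℤ) (T1 T2 : ℕ), 1 ≤ T1 → 1 ≤ T2 → |b| ≤ (T1 : ℤ) →
      (∀ i, |a i| ≤ (T2 : ℤ)) → ∀ j,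
      |MvPolynomial.eval a ((F.coeff j).eval (b : MvPolynomial (Fin n) ℤ))| ≤
        ((H * T1 ^ D : ℕ) : ℤ) * (T2 : ℤ) ^ D := by
    intro b a T1 T2 h1 h2 hb ha j
    rw [hFc, hil_fs_eval]
    have := hht (T1 * T2) (Nat.mul_pos h1 h2) (Fin.cons b a) ?_ j
    · refine this.trans (le_of_eq ?_)
      push_cast; ring
    · intro i
      refine Fin.cases ?_ (fun i => ?_) i
      · simp only [Fin.cons_zero]
        exact hb.trans (by exact_mod_cast Nat.le_mul_of_pos_right _ h2)
      · simp only [Fin.cons_succ]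
        exact (ha i).trans (by exact_mod_cast Nat.le_mul_of_pos_left _ h1)
  have hL1 : 1 * 1 ≤ H * L := Nat.mul_le_mul hH hL
  have hH2 : H ≤ 2 ^ ℓ := (Nat.le_mul_of_pos_right _ hL).trans hHL
  -- step 1: choose b0
  obtain ⟨L0, hL01, hL02, hL03⟩ := hch ℓ hℓ
  have hcℓ : 1 ≤ c * ℓ := by
    rcases Nat.eq_zero_or_pos (c * ℓ) with h0 | h0
    · rw [h0] at hL02
      have : 2 ^ 1 ≤ 2 ^ ℓ := Nat.pow_le_pow_right (by norm_num) hℓ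
      nlinarith
    · exact h0
  obtain ⟨b0, hb0, hb0r⟩ : ∃ b0 : ℤ, |b0| ≤ L0 ∧ ∀ q : MvPolynomial (Fin n) ℤ,
      F.evalEval (b0 : MvPolynomial (Fin n) ℤ) q ≠ 0 := by
    by_contra hcon
    push Not at hcon
    have h1 := hcurve n F hFm hFd hFn hFt hFroot H L0 (c * ℓ) hH hL01 hcℓ
      ((Nat.mul_le_mul_right _ hH2).trans hL02)
      (fun T hT b hb x hx j => by
        rw [hFc, hil_fs_eval]
        refine hht T hT _ (fun i => ?_) j
        refine Fin.cases ?_ (fun i => ?_) i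
        · simpa using hb
        · simpa using hx i)
      (Finset.Icc (0:ℤ) L0) (fun b hb => by
        rw [Finset.mem_Icc] at hb
        rw [abs_of_nonneg hb.1]; exact hb.2)
      (fun b hb => by
        rw [Finset.mem_Icc] at hb
        exact hcon b (by rw [abs_of_nonneg hb.1]; exact hb.2))
    rw [Int.card_Icc] at h1
    have : (((L0 : ℤ) + 1 - 0).toNat) = L0 + 1 := by omega
    omega
  -- step 2: bad a
  let Fa : (Fin n → ℤ) → (MvPolynomial (Fin 0) ℤ)[X][X] := fun a => F.map (mapRingHom (hilPsi a))
  let A := S.image (Fin.tail : (Fin (n+1) → ℤ) → (Fin n → ℤ))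
  let bad := A.filter (fun a => ∃ r, (Fa a).eval r = 0)
  let good := A.filter (fun a => ¬ ∃ r, (Fa a).eval r = 0)
  have hAL : ∀ a ∈ A, ∀ i, |a i| ≤ (L : ℤ) := by
    intro a ha i
    obtain ⟨x, hx, rfl⟩ := Finset.mem_image.1 ha
    exact (hS x hx).1 i.succ
  have hbad : bad.card * L ≤ Cn * ((1 + c * D) * ℓ) ^ 4 * L ^ n * (Nat.sqrt L + 1) := by
    refine hCn (F.map (evalRingHom (b0 : MvPolynomial (Fin n) ℤ))) (hFm.map _) ?_
      (natDegree_map_le.trans hFd) ?_ (H * L0 ^ D) L _ ?_ hL ?_ ?_ ?_ bad ?_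
    · intro r hr
      rw [← hil_evalEval] at hr
      exact hb0r r hr
    · intro j
      rw [coeff_map, coe_evalRingHom]
      exact hil_intcast_eval _ D (hFt j) b0
    · exact Nat.one_le_iff_ne_zero.2 (by positivity)
    · exact Nat.mul_pos (by omega) (by omega)
    · have hL0' : L0 ≤ 2 ^ (c * ℓ) := (Nat.le_mul_of_pos_left _ (by positivity)).trans hL02
      calc H * L0 ^ D * L = H * L * L0 ^ D := by ring
        _ ≤ 2 ^ ℓ * (2 ^ (c * ℓ)) ^ D := Nat.mul_le_mul hHL (Nat.pow_le_pow_left hL0' _)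
        _ = 2 ^ ((1 + c * D) * ℓ) := by rw [← pow_mul, ← pow_add]; ring_nf
    · intro T hT x hx j
      rw [coeff_map, coe_evalRingHom]
      exact hFh b0 x L0 T hL01 hT hb0 hx j
    · intro a ha
      obtain ⟨haA, r, hr⟩ := Finset.mem_filter.1 ha
      refine ⟨hAL a haA, MvPolynomial.eval (0 : Fin 0 → ℤ) (r.eval (b0 : MvPolynomial (Fin 0) ℤ)), ?_⟩
      rw [Polynomial.map_map, ← hil_psi_eval a b0 0, ← Polynomial.map_map, ← Polynomial.map_map, eval_map_apply]
      have := hil_eval_eval (Fa a) r (b0 : MvPolynomial (Fin 0) ℤ)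
      rw [hr] at this
      rw [← this]; simp
  -- step 3: good a
  have hfg : ∀ a ∈ good, (S.filter (fun x => Fin.tail x = a)).card ≤
      Cc * ((D + 1) * ℓ) ^ 4 * (Nat.sqrt L + 1) := by
    intro a ha
    obtain ⟨haA, hr⟩ := Finset.mem_filter.1 ha
    push Not at hr
    have hinj : (S.filter (fun x => Fin.tail x = a)).card =
        ((S.filter (fun x => Fin.tail x = a)).image (fun x => x 0)).card := by
      rw [Finset.card_image_of_injOn]
      intro x hx y hy hxy
      have hx' := (Finset.mem_filter.1 hx).2
      have hy' := (Finset.mem_filter.1 hy).2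
      rw [← Fin.cons_self_tail x, ← Fin.cons_self_tail y, hx', hy']
      simp only at hxy
      rw [hxy]
    rw [hinj]
    refine hcurve 0 (Fa a) (hFm.map _) (natDegree_map_le.trans hFd) ?_ ?_ hr (H * L ^ D) L
      ((D + 1) * ℓ) ?_ hL ?_ ?_ ?_ _ ?_ ?_
    · intro j
      simp only [Fa]
      rw [coeff_map, coe_mapRingHom]
      exact natDegree_map_le.trans (hFn j)
    · intro j k
      simp only [Fa]
      rw [coeff_map, coe_mapRingHom, coeff_map]
      rw [hilPsi, RingHom.comp_apply, MvPolynomial.totalDegree_C]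
      exact Nat.zero_le _
    · exact Nat.one_le_iff_ne_zero.2 (by positivity)
    · exact Nat.mul_pos (by omega) (by omega)
    · calc H * L ^ D * L ≤ (H * L) * (H * L) ^ D := by
            rw [show H * L ^ D * L = H * L * L ^ D by ring]
            exact Nat.mul_le_mul_left _ (Nat.pow_le_pow_left (Nat.le_mul_of_pos_left _ hH) _)
        _ = (H * L) ^ (D + 1) := by ring
        _ ≤ (2 ^ ℓ) ^ (D + 1) := Nat.pow_le_pow_left hHL _
        _ = _ := by rw [← pow_mul]; ring_nf
    · intro T hT b hb x hx j
      have h1 := DFunLike.congr_fun (hil_psi_eval a b x) (F.coeff j)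
      simp only [RingHom.comp_apply, coe_evalRingHom] at h1
      have h2 : (Fa a).coeff j = mapRingHom (hilPsi a) (F.coeff j) := by
        simp only [Fa]; rw [coeff_map]
      rw [h2, h1]
      refine (hFh b a T L hT hL hb (hAL a haA) j).trans (le_of_eq ?_)
      push_cast; ring
    · intro b hb
      obtain ⟨x, hx, rfl⟩ := Finset.mem_image.1 hb
      exact (hS x (Finset.mem_filter.1 hx).1).1 0
    · intro b hb
      obtain ⟨x, hx, rfl⟩ := Finset.mem_image.1 hb
      obtain ⟨hxS, hxa⟩ := Finset.mem_filter.1 hx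
      obtain ⟨-, y, hy⟩ := hS x hxS
      refine ⟨MvPolynomial.C y, ?_⟩
      rw [hil_evalEval]
      simp only [Fa]
      rw [Polynomial.map_map, hil_psi_map, ← Polynomial.map_map, hilPsi, ← Polynomial.map_map, hFe,
        ← hxa, Fin.cons_self_tail, eval_map_apply, hy, map_zero]
  have hfb : ∀ a ∈ bad, (S.filter (fun x => Fin.tail x = a)).card ≤ 3 * L := by
    intro a ha
    have hsub : (S.filter (fun x => Fin.tail x = a)) ⊆
        (Finset.Icc (-(L:ℤ)) L).image (fun b => (Fin.cons b a : Fin (n + 1) → ℤ)) := by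
      intro x hx
      obtain ⟨hxS, hxa⟩ := Finset.mem_filter.1 hx
      refine Finset.mem_image.2 ⟨x 0, ?_, ?_⟩
      · rw [Finset.mem_Icc]; exact abs_le.1 ((hS x hxS).1 0)
      · rw [← hxa]; exact Fin.cons_self_tail x
    refine (Finset.card_le_card hsub).trans (Finset.card_image_le.trans ?_)
    rw [Int.card_Icc]; omega
  have hgc : good.card ≤ (3 * L) ^ n := by
    have hsub : good ⊆ Fintype.piFinset (fun _ : Fin n => Finset.Icc (-(L:ℤ)) L) := by
      intro a ha
      rw [Fintype.mem_piFinset]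
      intro i
      rw [Finset.mem_Icc]; exact abs_le.1 (hAL a (Finset.mem_filter.1 ha).1 i)
    refine (Finset.card_le_card hsub).trans ?_
    rw [Fintype.card_piFinset_const, Int.card_Icc]
    exact Nat.pow_le_pow_left (by omega) _
  have hsum : S.card = ∑ a ∈ A, (S.filter (fun x => Fin.tail x = a)).card :=
    Finset.card_eq_sum_card_image _ S
  have hsplit : S.card = ∑ a ∈ bad, (S.filter (fun x => Fin.tail x = a)).card +
      ∑ a ∈ good, (S.filter (fun x => Fin.tail x = a)).card := by
    rw [hsum]; exact (Finset.sum_filter_add_sum_filter_not _ _ _).symm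
  have hb' := Finset.sum_le_card_nsmul bad _ _ hfb
  have hg' := Finset.sum_le_card_nsmul good _ _ hfg
  rw [smul_eq_mul] at hb' hg'
  have hS1 : S.card ≤ bad.card * (3 * L) + (3 * L) ^ n * (Cc * ((D + 1) * ℓ) ^ 4 * (Nat.sqrt L + 1)) := by
    rw [hsplit]
    exact Nat.add_le_add hb' (hg'.trans (Nat.mul_le_mul_right _ hgc))
  calc S.card * L ≤ (bad.card * (3 * L) + (3 * L) ^ n * (Cc * ((D + 1) * ℓ) ^ 4 * (Nat.sqrt L + 1))) * L :=
        Nat.mul_le_mul_right _ hS1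
    _ = 3 * L * (bad.card * L) + (3 * L) ^ n * (Cc * ((D + 1) * ℓ) ^ 4 * (Nat.sqrt L + 1)) * L := by ring
    _ ≤ 3 * L * (Cn * ((1 + c * D) * ℓ) ^ 4 * L ^ n * (Nat.sqrt L + 1)) +
        (3 * L) ^ n * (Cc * ((D + 1) * ℓ) ^ 4 * (Nat.sqrt L + 1)) * L :=
        Nat.add_le_add_right (Nat.mul_le_mul_left _ hbad) _
    _ = _ := by rw [mul_pow 3 L n]; ring

lemma hilP_all (n : ℕ) : HilP n := by
  induction n with
  | zero => exact hilP_zero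
  | succ n ih => exact hilP_succ n ih

lemma hil_natDeg_le {n : ℕ} (F : (MvPolynomial (Fin n) ℤ)[X]) (D : ℕ) (h : totalDeg F = D) (h0 : F ≠ 0) :
    F.natDegree ≤ D ∧ ∀ j, (F.coeff j).totalDegree ≤ D := by
  have h1 : ∀ k ∈ F.support, k + (F.coeff k).totalDegree ≤ D := by
    intro k hk
    rw [← h]
    exact Finset.le_sup (f := fun k => k + (F.coeff k).totalDegree) hk
  refine ⟨?_, fun j => ?_⟩
  · have := h1 _ (natDegree_mem_support_of_nonzero h0)
    omega
  · by_cases hj : j ∈ F.support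
    · have := h1 j hj; omega
    · rw [notMem_support_iff.1 hj]; simp

lemma hil_coeff_norm {n : ℕ} (F : (MvPolynomial (Fin n) ℤ)[X]) (j : ℕ) (d : Fin n →₀ ℕ) :
    |(F.coeff j).coeff d| ≤ (polyNorm F : ℤ) := by
  by_cases hj : j ∈ F.support
  · by_cases hd : d ∈ (F.coeff j).support
    · have h1 : ((F.coeff j).coeff d).natAbs ≤ mvNorm (F.coeff j) :=
        Finset.le_sup (f := fun m => ((F.coeff j).coeff m).natAbs) hd
      have h2 : mvNorm (F.coeff j) ≤ polyNorm F :=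
        Finset.le_sup (f := fun k => mvNorm (F.coeff k)) hj
      rw [Int.abs_eq_natAbs]
      exact_mod_cast h1.trans h2
    · rw [MvPolynomial.notMem_support_iff.1 hd]; simp
  · rw [notMem_support_iff.1 hj]; simp

lemma hil_eval_bound {n : ℕ} (g : MvPolynomial (Fin n) ℤ) (D N T : ℕ) (hd : g.totalDegree ≤ D)
    (hN : ∀ d, |g.coeff d| ≤ (N : ℤ)) (hT : 1 ≤ T) (x : Fin n → ℤ) (hx : ∀ i, |x i| ≤ (T : ℤ)) :
    |MvPolynomial.eval x g| ≤ (((D + 1) ^ n * N * T ^ D : ℕ) : ℤ) := by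
  classical
  rw [MvPolynomial.eval_eq']
  refine (Finset.abs_sum_le_sum_abs _ _).trans ?_
  refine (Finset.sum_le_card_nsmul _ _ ((N : ℤ) * (T : ℤ) ^ D) ?_).trans ?_
  · intro d hdm
    rw [abs_mul, Finset.abs_prod]
    refine mul_le_mul (hN d) ?_ (Finset.prod_nonneg fun i _ => abs_nonneg _) (by positivity)
    have h1 : ∏ i, |x i ^ d i| ≤ ∏ i, (T : ℤ) ^ d i := by
      refine Finset.prod_le_prod (fun i _ => abs_nonneg _) fun i _ => ?_
      rw [abs_pow]; exact pow_le_pow_left₀ (abs_nonneg _) (hx i) _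
    refine h1.trans ?_
    rw [Finset.prod_pow_eq_pow_sum]
    refine pow_le_pow_right₀ (by exact_mod_cast hT) ?_
    have := MvPolynomial.le_totalDegree hdm
    rw [Finsupp.sum_fintype _ _ (fun _ => rfl)] at this
    exact this.trans hd
  · have hcard : g.support.card ≤ (D + 1) ^ n := by
      have : g.support.card ≤ (Fintype.piFinset (fun _ : Fin n => Finset.range (D + 1))).card := by
        refine Finset.card_le_card_of_injOn (fun d => (d : Fin n → ℕ)) ?_ ?_
        · intro d hdm
          simp only [Finset.mem_coe, Fintype.mem_piFinset, Finset.mem_range]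
          intro i
          have h1 := MvPolynomial.monomial_le_degreeOf i hdm
          have h2 := MvPolynomial.degreeOf_le_totalDegree g i
          omega
        · intro d _ d' _ h
          exact DFunLike.coe_injective h
      rwa [Fintype.card_piFinset_const, Finset.card_range] at this
    rw [nsmul_eq_mul]
    push_cast
    rw [mul_assoc]
    exact mul_le_mul_of_nonneg_right (by exact_mod_cast hcard) (by positivity)

lemma hil_no_root {n : ℕ} (F : (MvPolynomial (Fin n) ℤ)[X]) (hirr : Irreducible (toQ F))
    (hd : 2 ≤ F.natDegree) (c : ℤ) (hc : c ≠ 0) (hlc : F.leadingCoeff = MvPolynomial.C c)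
    (r : MvPolynomial (Fin n) ℤ) : (integralNormalization F).eval r ≠ 0 := by
  intro hr
  let φ : MvPolynomial (Fin n) ℤ →+* MvPolynomial (Fin n) ℚ := MvPolynomial.map (Int.castRingHom ℚ)
  have hφ : Function.Injective φ := MvPolynomial.map_injective _ Int.cast_injective
  have hcQ : (c : ℚ) ≠ 0 := by exact_mod_cast hc
  have hφc : φ F.leadingCoeff = MvPolynomial.C (c : ℚ) := by
    rw [hlc]
    exact MvPolynomial.map_C _ _
  let s : MvPolynomial (Fin n) ℚ := MvPolynomial.C ((c : ℚ)⁻¹) * φ r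
  have hs : φ F.leadingCoeff * s = φ r := by
    rw [hφc, ← mul_assoc, ← MvPolynomial.C_mul, mul_inv_cancel₀ hcQ, MvPolynomial.C_1, one_mul]
  have h1 := integralNormalization_eval₂_leadingCoeff_mul (p := F) (by omega) φ s
  rw [hs, eval₂_at_apply, hr, map_zero] at h1
  have h2 : (toQ F).eval s = 0 := by
    rcases mul_eq_zero.1 h1.symm with h | h
    · exfalso
      have := eq_zero_of_pow_eq_zero h
      rw [hφc, MvPolynomial.C_eq_zero] at this
      exact hcQ this
    · rw [toQ, eval_map]; exact h
  obtain ⟨g, hg⟩ := dvd_iff_isRoot.2 h2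
  have hdeg : (toQ F).natDegree = F.natDegree := natDegree_map_eq_of_injective hφ F
  rcases hirr.isUnit_or_isUnit hg with h | h
  · exact not_isUnit_X_sub_C s h
  · have h3 := natDegree_eq_zero_of_isUnit h
    have h4 : (toQ F).natDegree ≤ 1 + 0 := by
      rw [hg]
      refine natDegree_mul_le.trans ?_
      rw [natDegree_X_sub_C, h3]
    omega

lemma hil_log_bound (n D : ℕ) : ∃ C3 : ℝ, 0 < C3 ∧ ∀ (N L : ℕ) (B : ℝ), 1 ≤ N → 1 ≤ L → 3 ≤ B → (L : ℝ) ≤ B →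
    ((Nat.log 2 ((D + 1) ^ n * N ^ (D + 1) * L) + 1 : ℕ) : ℝ) ≤ C3 * (Real.log ((N : ℝ) + 2) * Real.log B) := by
  have hlD : 0 ≤ Real.log ((D : ℝ) + 1) := Real.log_nonneg (by linarith [Nat.cast_nonneg (α := ℝ) D])
  refine ⟨2 * (n * Real.log ((D : ℝ) + 1) + (D + 1) + 1) + 1, by positivity, ?_⟩
  intro N L B hN hL hB hLB
  have hl3 : 1 ≤ Real.log 3 := by
    rw [Real.le_log_iff_exp_le (by norm_num)]
    exact Real.exp_one_lt_d9.le.trans (by norm_num)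
  have hN' : (1 : ℝ) ≤ N := by exact_mod_cast hN
  have hL' : (1 : ℝ) ≤ L := by exact_mod_cast hL
  have ha : 1 ≤ Real.log ((N : ℝ) + 2) := hl3.trans (Real.log_le_log (by norm_num) (by linarith))
  have hb : 1 ≤ Real.log B := hl3.trans (Real.log_le_log (by norm_num) hB)
  have hNa : Real.log N ≤ Real.log ((N : ℝ) + 2) := Real.log_le_log (by linarith) (by linarith)
  have hLb : Real.log L ≤ Real.log B := Real.log_le_log (by linarith) hLB
  set a := Real.log ((N : ℝ) + 2)
  set b := Real.log B
  have hab : 1 ≤ a * b := by nlinarith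
  have haab : a ≤ a * b := by nlinarith
  have hbab : b ≤ a * b := by nlinarith
  set Q := (D + 1) ^ n * N ^ (D + 1) * L with hQ
  have hQ1 : Q ≠ 0 := by rw [hQ]; positivity
  have hpow : 2 ^ Nat.log 2 Q ≤ Q := Nat.pow_log_le_self 2 hQ1
  have hlog : (Nat.log 2 Q : ℝ) * Real.log 2 ≤ Real.log Q := by
    rw [← Real.log_pow]
    exact Real.log_le_log (by positivity) (by exact_mod_cast hpow)
  have hlogQ : Real.log Q = n * Real.log ((D : ℝ) + 1) + (D + 1) * Real.log N + Real.log L := by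
    rw [hQ]; push_cast
    rw [Real.log_mul (by positivity) (by positivity), Real.log_mul (by positivity) (by positivity),
      Real.log_pow, Real.log_pow]
    push_cast; ring
  have hl2 : 1 / 2 ≤ Real.log 2 := by linarith [Real.log_two_gt_d9]
  have h1 : (Nat.log 2 Q : ℝ) * (1 / 2) ≤ Real.log Q :=
    (mul_le_mul_of_nonneg_left hl2 (Nat.cast_nonneg _)).trans hlog
  have hD0 : (0 : ℝ) ≤ D := Nat.cast_nonneg _
  have t1 : n * Real.log ((D : ℝ) + 1) ≤ n * Real.log ((D : ℝ) + 1) * (a * b) :=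
    le_mul_of_one_le_right (by positivity) hab
  have t2 : ((D : ℝ) + 1) * Real.log N ≤ (D + 1) * (a * b) :=
    mul_le_mul_of_nonneg_left (hNa.trans haab) (by positivity)
  push_cast
  linarith

theorem statement5 (n : ℕ) (hn : 1 ≤ n) :
    ∃ e : ℕ, 1 ≤ e ∧ ∀ D : ℕ, ∃ C : ℝ, 0 < C ∧
      ∀ F : Polynomial (MvPolynomial (Fin n) ℤ),
        Irreducible (toQ F) → 2 ≤ F.natDegree →
        (∃ c : ℤ, c ≠ 0 ∧ F.leadingCoeff = MvPolynomial.C c) →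
        totalDeg F = D →
        ∀ B : ℝ, 3 ≤ B →
          (NFB F B : ℝ) ≤
            C * Real.log ((polyNorm F : ℝ) + 2) ^ e * B ^ ((n : ℝ) - 1 / 2) *
              Real.log B ^ e := by
  classical
  refine ⟨4, by norm_num, fun D => ?_⟩
  obtain ⟨C0, hC0⟩ := hilP_all n D
  obtain ⟨C3, hC3, hlog⟩ := hil_log_bound n D
  refine ⟨2 * ((C0 : ℝ) + 1) * C3 ^ 4, by positivity, ?_⟩
  intro F hirr hdeg hlead hD B hB
  obtain ⟨c, hc, hlc⟩ := hlead
  have hF0 : F ≠ 0 := by rintro rfl; simp at hdeg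
  obtain ⟨hnat, htot⟩ := hil_natDeg_le F D hD hF0
  have hcN : |c| ≤ (polyNorm F : ℤ) := by
    have := hil_coeff_norm F F.natDegree 0
    rw [coeff_natDegree, hlc, MvPolynomial.coeff_zero_C] at this
    exact this
  have hN1 : 1 ≤ polyNorm F := by
    have : 1 ≤ |c| := Int.one_le_abs hc
    omega
  set N := polyNorm F with hNdef
  have hB0 : (0 : ℝ) ≤ B := by linarith
  obtain ⟨L, hL⟩ : ∃ L, L = ⌊B⌋₊ := ⟨_, rfl⟩
  have hL1 : 1 ≤ L := by rw [hL]; exact Nat.le_floor (by push_cast; linarith)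
  have hLB : (L : ℝ) ≤ B := by rw [hL]; exact Nat.floor_le hB0
  have hell := hlog N L B hN1 hL1 hB hLB
  obtain ⟨ℓ, hℓ⟩ : ∃ ℓ, ℓ = Nat.log 2 ((D + 1) ^ n * N ^ (D + 1) * L) + 1 := ⟨_, rfl⟩
  rw [← hℓ] at hell
  obtain ⟨S, hScard, hS⟩ : ∃ S : Finset (Fin n → ℤ), NFB F B ≤ S.card ∧ ∀ x ∈ S, (∀ i, |x i| ≤ (L : ℤ)) ∧
      ∃ y : ℤ, (F.map (MvPolynomial.eval x)).eval y = 0 := by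
    rcases Set.finite_or_infinite {x : Fin n → ℤ | (∀ i, |(x i : ℝ)| ≤ B) ∧
      ∃ y : ℤ, Polynomial.eval y (F.map (MvPolynomial.eval x)) = 0} with hfin | hinf
    · refine ⟨hfin.toFinset, ?_, ?_⟩
      · rw [NFB, Set.ncard_eq_toFinset_card _ hfin]
      · intro x hx
        rw [Set.Finite.mem_toFinset] at hx
        refine ⟨fun i => ?_, hx.2⟩
        have h1 : (x i).natAbs ≤ L := by
          rw [hL]
          apply Nat.le_floor
          rw [Nat.cast_natAbs, Int.cast_abs]
          exact hx.1 i
        rw [Int.abs_eq_natAbs]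
        exact_mod_cast h1
    · refine ⟨∅, ?_, by simp⟩
      rw [NFB, hinf.ncard]; simp
  have hmain := hC0 (integralNormalization F) (monic_integralNormalization hF0)
    (hil_no_root F hirr hdeg c hc hlc) (by rw [natDegree_integralNormalization]; exact hnat)
    (by
      intro j
      rw [integralNormalization_coeff]
      split_ifs
      · simp
      · refine (MvPolynomial.totalDegree_mul _ _).trans ?_
        rw [hlc, ← MvPolynomial.C_pow, MvPolynomial.totalDegree_C, add_zero]
        exact htot j)
    ((D + 1) ^ n * N ^ (D + 1)) L ℓ (Nat.one_le_iff_ne_zero.2 (by positivity)) hL1 (by omega)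
    (by rw [hℓ]; exact (Nat.lt_pow_succ_log_self (by norm_num) _).le)
    (by
      intro T hT x hx j
      rw [integralNormalization_coeff]
      split_ifs
      · rw [map_one, abs_one]
        have : 1 ≤ (D + 1) ^ n * N ^ (D + 1) * T ^ D := Nat.one_le_iff_ne_zero.2 (by positivity)
        exact_mod_cast this
      · rw [hlc, map_mul, map_pow, MvPolynomial.eval_C, abs_mul, abs_pow]
        have h1 := hil_eval_bound (F.coeff j) D N T (htot j) (hil_coeff_norm F j) hT x hx
        have h2 : |c| ^ (F.natDegree - 1 - j) ≤ (N : ℤ) ^ D :=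
          (pow_le_pow_left₀ (abs_nonneg _) hcN _).trans
            (pow_le_pow_right₀ (by exact_mod_cast hN1) (by omega))
        refine (mul_le_mul h1 h2 (by positivity) (by positivity)).trans (le_of_eq ?_)
        push_cast; ring)
    S (by
      intro x hx
      obtain ⟨hxL, y, hy⟩ := hS x hx
      refine ⟨hxL, MvPolynomial.eval x F.leadingCoeff * y, ?_⟩
      rw [eval_map, integralNormalization_eval₂_leadingCoeff_mul (by omega), ← eval_map, hy, mul_zero])
  -- conclude
  obtain ⟨k, rfl⟩ : ∃ k, n = k + 1 := ⟨n - 1, by omega⟩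
  have hnat2 : S.card ≤ C0 * ℓ ^ 4 * L ^ k * (Nat.sqrt L + 1) := by
    refine Nat.le_of_mul_le_mul_right (hmain.trans (le_of_eq ?_)) hL1
    ring
  have hreal : (S.card : ℝ) ≤ C0 * (ℓ : ℝ) ^ 4 * (L : ℝ) ^ k * ((Nat.sqrt L : ℝ) + 1) := by
    exact_mod_cast hnat2
  have hsq : ((Nat.sqrt L : ℝ) + 1) ≤ 2 * Real.sqrt B := by
    have h1 : (Nat.sqrt L : ℝ) ≤ Real.sqrt B := Real.nat_sqrt_le_real_sqrt.trans (Real.sqrt_le_sqrt hLB)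
    have h2 : 1 ≤ Real.sqrt B := Real.one_le_sqrt.2 (by linarith)
    linarith
  have hpow : B ^ (((k + 1 : ℕ) : ℝ) - 1 / 2) = B ^ k * Real.sqrt B := by
    rw [Real.sqrt_eq_rpow, ← Real.rpow_natCast, ← Real.rpow_add (by linarith)]
    congr 1; push_cast; ring
  rw [hpow]
  have hcast : (NFB F B : ℝ) ≤ S.card := by exact_mod_cast hScard
  refine hcast.trans (hreal.trans ?_)
  calc (C0 : ℝ) * (ℓ : ℝ) ^ 4 * (L : ℝ) ^ k * ((Nat.sqrt L : ℝ) + 1)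
      ≤ ((C0 : ℝ) + 1) * (C3 * (Real.log ((N : ℝ) + 2) * Real.log B)) ^ 4 * B ^ k * (2 * Real.sqrt B) := by
        gcongr
        linarith
    _ = _ := by ring
end
end

section
/- Fix integers n ≥ 1 and D ≥ 1. Let F ∈ ℤ[X₁,…,Xₙ] be a polynomial of total degree D that is absolutely irreducible (irreducible in ℚ̄[X₁,…,Xₙ]), with ‖F‖ ≥ 3. Then there exists a finite set E of primes with |E| ≤ C(n,D) · log‖F‖ / log log‖F‖, for a constant C(n,D) depending only on n and D, such that for every prime p ∉ E the reduction of F modulo p has total degree D and is irreducible in 𝔽̄_p[X₁,…,Xₙ]. -/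
open Polynomial

noncomputable section

lemma gaussV {σ L : Type*} [Field L] (V : ValuationSubring L) (G H : MvPolynomial σ L)
    (h : ∀ m, MvPolynomial.coeff m (G * H) ∈ V) (i j : σ →₀ ℕ) :
    MvPolynomial.coeff i G * MvPolynomial.coeff j H ∈ V := by
  classical
  have key : ∀ P : MvPolynomial σ L, P ≠ 0 → ∃ (c : L) (Q : MvPolynomial σ V), c ≠ 0 ∧
      P = MvPolynomial.C c * MvPolynomial.map V.subtype Q ∧
      MvPolynomial.map (IsLocalRing.residue V) Q ≠ 0 := by
    intro P hP
    have hs : P.support.Nonempty := MvPolynomial.support_nonempty.mpr hP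
    obtain ⟨i0, hi0, hmax⟩ := P.support.exists_max_image
      (fun m => V.valuation (MvPolynomial.coeff m P)) hs
    have hc : MvPolynomial.coeff i0 P ≠ 0 := MvPolynomial.mem_support_iff.mp hi0
    have hmem : ∀ m, (MvPolynomial.coeff i0 P)⁻¹ * MvPolynomial.coeff m P ∈ V := by
      intro m
      rw [← V.valuation_le_one_iff]
      by_cases hm : m ∈ P.support
      · have := hmax m hm
        rw [map_mul, map_inv₀]
        have h0 : V.valuation (MvPolynomial.coeff i0 P) ≠ 0 := by simpa using hc
        rw [inv_mul_le_iff₀ (zero_lt_iff.mpr h0), mul_one]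
        exact this
      · rw [MvPolynomial.notMem_support_iff.mp hm]; simp
    have hr : MvPolynomial.C (MvPolynomial.coeff i0 P)⁻¹ * P ∈
        Set.range (MvPolynomial.map (σ := σ) V.subtype) := by
      rw [MvPolynomial.mem_range_map_iff_coeffs_subset]
      intro x hx
      rw [Finset.mem_coe, MvPolynomial.mem_coeffs_iff] at hx
      obtain ⟨m, _, rfl⟩ := hx
      rw [MvPolynomial.coeff_C_mul]
      exact ⟨⟨_, hmem m⟩, rfl⟩
    obtain ⟨Q, hQ⟩ := hr
    refine ⟨MvPolynomial.coeff i0 P, Q, hc, ?_, ?_⟩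
    · rw [hQ, ← mul_assoc, ← MvPolynomial.C_mul, mul_inv_cancel₀ hc, MvPolynomial.C_1, one_mul]
    · intro h0
      have h1 := congrArg (MvPolynomial.coeff i0) hQ
      rw [MvPolynomial.coeff_map, MvPolynomial.coeff_C_mul, inv_mul_cancel₀ hc] at h1
      have h2 : MvPolynomial.coeff i0 Q = 1 := Subtype.ext h1
      have h3 := congrArg (MvPolynomial.coeff i0) h0
      rw [MvPolynomial.coeff_map, h2] at h3
      simp at h3
  by_cases hG : G = 0
  · simp [hG, V.zero_mem]
  by_cases hH : H = 0
  · simp [hH, V.zero_mem]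
  obtain ⟨c, G1, hc, hG1, hG2⟩ := key G hG
  obtain ⟨d, H1, hd, hH1, hH2⟩ := key H hH
  have hne : MvPolynomial.map (IsLocalRing.residue V) (G1 * H1) ≠ 0 := by
    rw [map_mul]; exact mul_ne_zero hG2 hH2
  obtain ⟨m, hm⟩ := MvPolynomial.ne_zero_iff.mp hne
  rw [MvPolynomial.coeff_map, IsLocalRing.residue_ne_zero_iff_isUnit] at hm
  obtain ⟨u, hu⟩ := hm
  have hprod : G * H = MvPolynomial.C (c * d) * MvPolynomial.map V.subtype (G1 * H1) := by
    rw [hG1, hH1, map_mul (MvPolynomial.map _), MvPolynomial.C_mul]; ring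
  have hcm := h m
  rw [hprod, MvPolynomial.coeff_C_mul, MvPolynomial.coeff_map, ← hu] at hcm
  have hcd : c * d ∈ V := by
    have := V.mul_mem _ _ hcm (u⁻¹ : Vˣ).1.2
    have e : ((u : V) : L) * (((u⁻¹ : Vˣ) : V) : L) = 1 := by
      exact congrArg (Subtype.val) (u.mul_inv)
    have e2 : c * d * (V.subtype (u : V)) * (((u⁻¹ : Vˣ) : V) : L) = c * d := by
      rw [mul_assoc]; erw [e]; rw [mul_one]
    rw [e2] at this
    exact this
  rw [hG1, hH1, MvPolynomial.coeff_C_mul, MvPolynomial.coeff_C_mul, MvPolynomial.coeff_map,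
    MvPolynomial.coeff_map]
  have := V.mul_mem _ _ hcd (V.mul_mem _ _ (MvPolynomial.coeff i G1).2 (MvPolynomial.coeff j H1).2)
  convert this using 1
  simp only [ValuationSubring.subtype_apply]
  ring

lemma isIntegral_coeff_mul {σ R T : Type*} [CommRing R] [CommRing T] [IsDomain T] [Algebra R T]
    (G H : MvPolynomial σ T)
    (h : ∀ m, MvPolynomial.coeff m (G * H) ∈ (algebraMap R T).range) (i j : σ →₀ ℕ) :
    IsIntegral R (MvPolynomial.coeff i G * MvPolynomial.coeff j H) := by
  let L := FractionRing T
  have hinj : Function.Injective (algebraMap T L) := IsFractionRing.injective T L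
  rw [← isIntegral_algebraMap_iff hinj]
  let s : Set L := ((⊥ : Subalgebra R L) : Set L)
  have hx : algebraMap T L (MvPolynomial.coeff i G * MvPolynomial.coeff j H) ∈
      (⨅ V : {V : ValuationSubring L // s ⊆ V.toSubring}, V.1.toSubring) := by
    rw [Subring.mem_iInf]
    rintro ⟨V, hV⟩
    have := gaussV V (MvPolynomial.map (algebraMap T L) G) (MvPolynomial.map (algebraMap T L) H)
      (by
        intro m
        rw [← map_mul, MvPolynomial.coeff_map]
        obtain ⟨r, hr⟩ := h m
        apply hV
        rw [← hr, ← IsScalarTower.algebraMap_apply]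
        exact Subalgebra.algebraMap_mem _ r) i j
    rw [MvPolynomial.coeff_map, MvPolynomial.coeff_map, ← map_mul] at this
    exact this
  rw [iInf_valuationSubring_superset] at hx
  have hcl : Subring.closure s = (⊥ : Subalgebra R L).toSubring :=
    Subring.closure_eq (⊥ : Subalgebra R L).toSubring
  rw [hcl] at hx
  have hx' : IsIntegral (⊥ : Subalgebra R L)
    (algebraMap T L (MvPolynomial.coeff i G * MvPolynomial.coeff j H)) := hx
  exact isIntegral_trans (R := R) (A := (⊥ : Subalgebra R L)) _ hx'

/-- Extending a homomorphism to an algebraically closed field along an integral extension. -/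
lemma exists_extend {R T K : Type*} [CommRing R] [CommRing T] [Algebra R T] [IsDomain T]
    [Algebra.IsIntegral R T] [Field K] [IsAlgClosed K] (φ : R →+* K)
    (hφ : RingHom.ker (algebraMap R T) ≤ RingHom.ker φ) :
    ∃ ψ : T →+* K, ψ.comp (algebraMap R T) = φ := by
  have : (RingHom.ker φ).IsPrime := RingHom.ker_isPrime φ
  obtain ⟨Q, hQ, hQ2⟩ := Ideal.exists_ideal_over_prime_of_isIntegral_of_isDomain (S := T)
    (RingHom.ker φ) hφ
  let ι : R ⧸ RingHom.ker φ →+* K := RingHom.kerLift φ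
  have hι : Function.Injective ι := RingHom.kerLift_injective φ
  let : Algebra (R ⧸ RingHom.ker φ) K := ι.toAlgebra
  let κ : R ⧸ RingHom.ker φ →+* T ⧸ Q := Ideal.quotientMap Q (algebraMap R T) (le_of_eq hQ2.symm)
  let : Algebra (R ⧸ RingHom.ker φ) (T ⧸ Q) := κ.toAlgebra
  have hκ : Function.Injective κ := Ideal.quotientMap_injective' (le_of_eq hQ2)
  have : Module.IsTorsionFree (R ⧸ RingHom.ker φ) K :=
    Module.isTorsionFree_iff_algebraMap_injective.mpr hι
  have : Module.IsTorsionFree (R ⧸ RingHom.ker φ) (T ⧸ Q) :=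
    Module.isTorsionFree_iff_algebraMap_injective.mpr hκ
  have : IsScalarTower R (R ⧸ RingHom.ker φ) (T ⧸ Q) := IsScalarTower.of_algebraMap_eq
    (fun r => rfl)
  have : Algebra.IsIntegral R (T ⧸ Q) := by
    refine ⟨fun x => ?_⟩
    obtain ⟨y, rfl⟩ := Ideal.Quotient.mk_surjective x
    exact (Algebra.IsIntegral.isIntegral (R := R) y).map (Ideal.Quotient.mkₐ R Q)
  have : Algebra.IsIntegral (R ⧸ RingHom.ker φ) (T ⧸ Q) := Algebra.IsIntegral.tower_top R
  let l : T ⧸ Q →ₐ[R ⧸ RingHom.ker φ] K := IsAlgClosed.lift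
  refine ⟨l.toRingHom.comp (Ideal.Quotient.mk Q), ?_⟩
  ext r
  exact l.commutes (Ideal.Quotient.mk _ r)

/-- The exponents of degree at most `d`. -/
def expo (n d : ℕ) : Finset (Fin n →₀ ℕ) := (Finsupp.finite_of_degree_le (σ := Fin n) d).toFinset

lemma mem_expo {n d : ℕ} {m : Fin n →₀ ℕ} : m ∈ expo n d ↔ m.degree ≤ d := by
  simp [expo]

/-- The generic polynomial of degree at most `d` with coefficients `c`. -/
def genPoly {n d : ℕ} {T : Type*} [CommRing T] (c : expo n d → T) : MvPolynomial (Fin n) T :=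
  ∑ i : expo n d, MvPolynomial.monomial (i : Fin n →₀ ℕ) (c i)

lemma coeff_genPoly {n d : ℕ} {T : Type*} [CommRing T] (c : expo n d → T) (i : expo n d) :
    MvPolynomial.coeff (i : Fin n →₀ ℕ) (genPoly c) = c i := by
  classical
  simp [genPoly, MvPolynomial.coeff_sum, MvPolynomial.coeff_monomial, Subtype.ext_iff.symm]

lemma totalDegree_genPoly {n d : ℕ} {T : Type*} [CommRing T] (c : expo n d → T) :
    (genPoly c).totalDegree ≤ d := by
  refine MvPolynomial.totalDegree_finsetSum_le fun i _ => ?_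
  refine (MvPolynomial.totalDegree_monomial_le _ _).trans ?_
  exact mem_expo.mp i.2

lemma map_genPoly {n d : ℕ} {T S : Type*} [CommRing T] [CommRing S] (f : T →+* S)
    (c : expo n d → T) : MvPolynomial.map f (genPoly c) = genPoly (fun i => f (c i)) := by
  simp [genPoly, MvPolynomial.map_monomial]

lemma genPoly_coeff {n d : ℕ} {T : Type*} [CommRing T] (P : MvPolynomial (Fin n) T)
    (hP : P.totalDegree ≤ d) : genPoly (fun i : expo n d => MvPolynomial.coeff i P) = P := by
  classical
  ext m
  by_cases hm : m ∈ expo n d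
  · exact coeff_genPoly _ ⟨m, hm⟩
  · have h1 : d < m.degree := by
      rw [mem_expo] at hm; omega
    rw [MvPolynomial.coeff_eq_zero_of_totalDegree_lt (f := P),
      MvPolynomial.coeff_eq_zero_of_totalDegree_lt]
    · exact lt_of_le_of_lt (totalDegree_genPoly _) h1
    · exact lt_of_le_of_lt hP h1

/-- The ring of coefficients of a pair of generic polynomials. -/
abbrev PairRing (n a b : ℕ) := MvPolynomial (expo n a ⊕ expo n b) ℤ

def genL (n a b : ℕ) : MvPolynomial (Fin n) (PairRing n a b) :=
  genPoly (fun i : expo n a => MvPolynomial.X (Sum.inl i))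

def genR (n a b : ℕ) : MvPolynomial (Fin n) (PairRing n a b) :=
  genPoly (fun i : expo n b => MvPolynomial.X (Sum.inr i))

/-- The comorphism of multiplication of polynomials. -/
def mulMap (n a b : ℕ) : MvPolynomial (expo n (a + b)) ℤ →+* PairRing n a b :=
  (MvPolynomial.aeval (R := ℤ) fun m : expo n (a + b) =>
    MvPolynomial.coeff (m : Fin n →₀ ℕ) (genL n a b * genR n a b)).toRingHom

lemma mulMap_X (n a b : ℕ) (m : expo n (a + b)) : mulMap n a b (MvPolynomial.X m) =
    MvPolynomial.coeff (m : Fin n →₀ ℕ) (genL n a b * genR n a b) := by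
  simp [mulMap]

lemma totalDegree_gen_mul (n a b : ℕ) : (genL n a b * genR n a b).totalDegree ≤ a + b :=
  (MvPolynomial.totalDegree_mul _ _).trans
    (add_le_add (totalDegree_genPoly _) (totalDegree_genPoly _))

/-- Evaluation at the coefficients of a polynomial. -/
def evCoeff {n d : ℕ} {K : Type*} [CommRing K] (F : MvPolynomial (Fin n) K) :
    MvPolynomial (expo n d) ℤ →+* K :=
  (MvPolynomial.aeval (R := ℤ) fun m : expo n d =>
    MvPolynomial.coeff (m : Fin n →₀ ℕ) F).toRingHom

lemma evCoeff_X {n d : ℕ} {K : Type*} [CommRing K] (F : MvPolynomial (Fin n) K) (m : expo n d) :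
    evCoeff F (MvPolynomial.X m) = MvPolynomial.coeff (m : Fin n →₀ ℕ) F := by
  simp [evCoeff]

lemma evCoeff_map {n d : ℕ} {K S : Type*} [CommRing K] [CommRing S] (f : K →+* S)
    (F : MvPolynomial (Fin n) K) (P : MvPolynomial (expo n d) ℤ) :
    evCoeff (MvPolynomial.map f F) P = f (evCoeff F P) := by
  have : (evCoeff (d := d) (MvPolynomial.map f F)) = f.comp (evCoeff F) := by
    apply MvPolynomial.ringHom_ext'
    · exact RingHom.ext_int _ _
    · intro m; simp [evCoeff_X, MvPolynomial.coeff_map]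
  rw [this]; rfl

/-- Polynomials in the kernel vanish at the coefficients of a product. -/
lemma evCoeff_mul_eq_zero {n a b : ℕ} {K : Type*} [CommRing K] (G H : MvPolynomial (Fin n) K)
    (hG : G.totalDegree ≤ a) (hH : H.totalDegree ≤ b) (P : MvPolynomial (expo n (a + b)) ℤ)
    (hP : P ∈ RingHom.ker (mulMap n a b)) : evCoeff (G * H) P = 0 := by
  let θ : PairRing n a b →+* K := (MvPolynomial.aeval (R := ℤ)
    (Sum.elim (fun i : expo n a => MvPolynomial.coeff (i : Fin n →₀ ℕ) G)
      (fun j : expo n b => MvPolynomial.coeff (j : Fin n →₀ ℕ) H))).toRingHom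
  have h1 : MvPolynomial.map θ (genL n a b) = G := by
    rw [genL, map_genPoly]
    simpa [θ] using genPoly_coeff G hG
  have h2 : MvPolynomial.map θ (genR n a b) = H := by
    rw [genR, map_genPoly]
    simpa [θ] using genPoly_coeff H hH
  have : evCoeff (d := a + b) (G * H) = θ.comp (mulMap n a b) := by
    apply MvPolynomial.ringHom_ext'
    · exact RingHom.ext_int _ _
    · intro m
      rw [evCoeff_X, RingHom.comp_apply, mulMap_X, ← MvPolynomial.coeff_map, map_mul, h1, h2]
  rw [this, RingHom.comp_apply, RingHom.mem_ker.mp hP, map_zero]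

/-- The abstract extension statement for products of coefficients. -/
lemma exists_rank_one {σ R T K : Type*} [DecidableEq σ] [CommRing R] [CommRing T] [IsDomain T]
    [Algebra R T] [Field K] [IsAlgClosed K] (G H : MvPolynomial σ T)
    (hr : ∀ m, MvPolynomial.coeff m (G * H) ∈ (algebraMap R T).range) (φ : R →+* K)
    (hφ : RingHom.ker (algebraMap R T) ≤ RingHom.ker φ) :
    ∃ w : (σ →₀ ℕ) → (σ →₀ ℕ) → K, (∀ i j k l, w i j * w k l = w i l * w k j) ∧
      (∀ m r, algebraMap R T r = MvPolynomial.coeff m (G * H) →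
        φ r = ∑ x ∈ Finset.HasAntidiagonal.antidiagonal m, w x.1 x.2) ∧
      (∀ i j, MvPolynomial.coeff i G * MvPolynomial.coeff j H = 0 → w i j = 0) := by
  have hint := isIntegral_coeff_mul (R := R) G H hr
  obtain ⟨ψ, hψ⟩ := exists_extend (T := integralClosure R T) φ (by
    intro P hP
    apply hφ
    rw [RingHom.mem_ker] at hP ⊢
    exact congrArg Subtype.val hP)
  let e : (σ →₀ ℕ) → (σ →₀ ℕ) → integralClosure R T := fun i j => ⟨_, hint i j⟩
  have he : ∀ i j, (e i j : T) = MvPolynomial.coeff i G * MvPolynomial.coeff j H :=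
    fun i j => rfl
  refine ⟨fun i j => ψ (e i j), ?_, ?_, ?_⟩
  · intro i j k l
    have : e i j * e k l = e i l * e k j := by
      apply Subtype.ext
      rw [Subalgebra.coe_mul, Subalgebra.coe_mul, he, he, he, he]
      ring
    simp only [← map_mul, this]
  · intro m r h
    have : algebraMap R (integralClosure R T) r =
        ∑ x ∈ Finset.HasAntidiagonal.antidiagonal m, e x.1 x.2 := by
      apply Subtype.ext
      rw [AddSubmonoidClass.coe_finsetSum]
      refine Eq.trans h ?_
      rw [MvPolynomial.coeff_mul]
    simp only [← map_sum, ← this]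
    rw [← hψ, RingHom.comp_apply]
  · intro i j h
    have : e i j = 0 := Subtype.ext h
    simp only [this, map_zero]

/-- If all polynomials in the kernel vanish at `F ≠ 0`, then `F` is a product. -/
lemma exists_factor {n a b : ℕ} {K : Type*} [Field K] [IsAlgClosed K] (F : MvPolynomial (Fin n) K)
    (hF : F ≠ 0) (hdeg : F.totalDegree ≤ a + b)
    (h : RingHom.ker (mulMap n a b) ≤ RingHom.ker (evCoeff (d := a + b) F)) :
    ∃ G H : MvPolynomial (Fin n) K, G.totalDegree ≤ a ∧ H.totalDegree ≤ b ∧ G * H = F := by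
  classical
  let : Algebra (MvPolynomial (expo n (a + b)) ℤ) (PairRing n a b) := (mulMap n a b).toAlgebra
  obtain ⟨w, hw, hsum, hz⟩ := exists_rank_one (genL n a b) (genR n a b) (by
    intro m
    by_cases hm : m ∈ expo n (a + b)
    · exact ⟨MvPolynomial.X ⟨m, hm⟩, mulMap_X n a b ⟨m, hm⟩⟩
    · rw [MvPolynomial.coeff_eq_zero_of_totalDegree_lt]
      · exact zero_mem _
      · refine lt_of_le_of_lt (totalDegree_gen_mul n a b) ?_
        rw [mem_expo] at hm
        change _ < m.degree
        omega) (evCoeff (d := a + b) F) h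
  have hwz1 : ∀ i j, i ∉ expo n a → w i j = 0 := by
    intro i j hi
    rw [mem_expo, not_le] at hi
    apply hz
    rw [genL, MvPolynomial.coeff_eq_zero_of_totalDegree_lt
            (lt_of_le_of_lt (totalDegree_genPoly _) hi), zero_mul]
  have hwz2 : ∀ i j, j ∉ expo n b → w i j = 0 := by
    intro i j hi
    rw [mem_expo, not_le] at hi
    apply hz
    rw [mul_comm, genR, MvPolynomial.coeff_eq_zero_of_totalDegree_lt
            (lt_of_le_of_lt (totalDegree_genPoly _) hi), zero_mul]
  have hcoeff : ∀ m, MvPolynomial.coeff m F =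
      ∑ x ∈ Finset.HasAntidiagonal.antidiagonal m, w x.1 x.2 := by
    intro m
    by_cases hm : m ∈ expo n (a + b)
    · rw [← hsum m (MvPolynomial.X ⟨m, hm⟩) (mulMap_X n a b ⟨m, hm⟩), evCoeff_X]
    · rw [mem_expo, not_le] at hm
      rw [MvPolynomial.coeff_eq_zero_of_totalDegree_lt (lt_of_le_of_lt hdeg hm)]
      symm
      apply Finset.sum_eq_zero
      rintro ⟨i, j⟩ hij
      rw [Finset.HasAntidiagonal.mem_antidiagonal] at hij
      simp only at hij
      have : a < i.degree ∨ b < j.degree := by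
        have : i.degree + j.degree = m.degree := by rw [← hij]; exact (map_add _ _ _).symm
        omega
      rcases this with h' | h'
      · exact hwz1 i j (by rw [mem_expo]; omega)
      · exact hwz2 i j (by rw [mem_expo]; omega)
  obtain ⟨m0, hm0⟩ := MvPolynomial.ne_zero_iff.mp hF
  rw [hcoeff] at hm0
  obtain ⟨⟨i0, j0⟩, -, h0⟩ := Finset.exists_ne_zero_of_sum_ne_zero hm0
  simp only at h0
  have hcG : ∀ i, MvPolynomial.coeff i (genPoly (fun i : expo n a => w i j0)) = w i j0 := by
    intro i
    by_cases hi : i ∈ expo n a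
    · exact coeff_genPoly (fun i : expo n a => w i j0) ⟨i, hi⟩
    · rw [hwz1 _ _ hi]
      rw [mem_expo, not_le] at hi
      exact MvPolynomial.coeff_eq_zero_of_totalDegree_lt
            (lt_of_le_of_lt (totalDegree_genPoly _) hi)
  have hcH : ∀ j, MvPolynomial.coeff j (genPoly (fun j : expo n b => w i0 j / w i0 j0)) =
      w i0 j / w i0 j0 := by
    intro i
    by_cases hi : i ∈ expo n b
    · exact coeff_genPoly (fun j : expo n b => w i0 j / w i0 j0) ⟨i, hi⟩
    · rw [hwz2 _ _ hi, zero_div]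
      rw [mem_expo, not_le] at hi
      exact MvPolynomial.coeff_eq_zero_of_totalDegree_lt
            (lt_of_le_of_lt (totalDegree_genPoly _) hi)
  refine ⟨genPoly (fun i : expo n a => w i j0), genPoly (fun j : expo n b => w i0 j / w i0 j0),
    totalDegree_genPoly _, totalDegree_genPoly _, ?_⟩
  ext m
  rw [MvPolynomial.coeff_mul, hcoeff]
  refine Finset.sum_congr rfl fun x _ => ?_
  rw [hcG, hcH, ← mul_div_assoc, hw x.1 j0 i0 x.2, mul_div_assoc, div_self h0, mul_one]

lemma factorial_card_le_prod (s : Finset ℕ) (hs : ∀ x ∈ s, 0 < x) :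
    s.card.factorial ≤ ∏ x ∈ s, x := by
  induction s using Finset.induction_on_max with
  | empty => simp
  | insert a s ha ih =>
    have hn : a ∉ s := fun h => lt_irrefl _ (ha a h)
    rw [Finset.card_insert_of_notMem hn, Finset.prod_insert hn, Nat.factorial_succ]
    refine Nat.mul_le_mul ?_ (ih fun x hx => hs x (Finset.mem_insert_of_mem hx))
    have : s ⊆ Finset.Ico 1 a := fun x hx =>
      Finset.mem_Ico.mpr ⟨hs x (Finset.mem_insert_of_mem hx), ha x hx⟩
    have h1 := Finset.card_le_card this
    have h2 := hs a (Finset.mem_insert_self _ _)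
    rw [Nat.card_Ico] at h1
    omega

lemma eval_bound {ι : Type*} (P : MvPolynomial ι ℤ) : ∃ B : ℕ, ∀ (x : ι → ℤ) (M : ℕ), 3 ≤ M →
    (∀ i, (x i).natAbs ≤ M) → (MvPolynomial.aeval x P).natAbs ≤ M ^ B := by
  induction P using MvPolynomial.induction_on with
  | C c =>
    refine ⟨c.natAbs, fun x M hM _ => ?_⟩
    simpa using (Nat.lt_pow_self (by omega : 1 < M)).le
  | add p q hp hq =>
    obtain ⟨B1, h1⟩ := hp
    obtain ⟨B2, h2⟩ := hq
    refine ⟨B1 + B2 + 1, fun x M hM hx => ?_⟩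
    rw [map_add]
    have e1 := h1 x M hM hx
    have e2 := h2 x M hM hx
    have e3 : M ^ B1 ≤ M ^ (B1 + B2) := Nat.pow_le_pow_right (by omega) (by omega)
    have e4 : M ^ B2 ≤ M ^ (B1 + B2) := Nat.pow_le_pow_right (by omega) (by omega)
    have e5 : M ^ (B1 + B2) * 3 ≤ M ^ (B1 + B2) * M := Nat.mul_le_mul_left _ hM
    rw [pow_succ]
    have := Int.natAbs_add_le (MvPolynomial.aeval x p) (MvPolynomial.aeval x q)
    omega
  | mul_X p i hp =>
    obtain ⟨B1, h1⟩ := hp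
    refine ⟨B1 + 1, fun x M hM hx => ?_⟩
    rw [map_mul, Int.natAbs_mul, pow_succ, MvPolynomial.aeval_X]
    exact Nat.mul_le_mul (h1 x M hM hx) (hx i)

lemma count_bound (k B M : ℕ) (hM : 3 ≤ M) (h : k.factorial ≤ M ^ B) :
    (k : ℝ) ≤ (2 * B + 2 * Real.exp 1) * Real.log M / Real.log (Real.log M) := by
  have hM' : (3 : ℝ) ≤ M := by exact_mod_cast hM
  set L := Real.log M with hL
  have hL1 : 1 < L := by
    rw [hL, Real.lt_log_iff_exp_lt (by linarith)]
    have := Real.exp_one_lt_d9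
    linarith
  have hl : 0 < Real.log L := Real.log_pos hL1
  rw [le_div_iff₀ hl]
  have hsq : 0 < Real.sqrt L := Real.sqrt_pos.mpr (by linarith)
  have hlog : Real.log L = 2 * Real.log (Real.sqrt L) := by
    rw [Real.log_sqrt (by linarith)]; ring
  have hB : (0 : ℝ) ≤ B := Nat.cast_nonneg _
  have he : 0 < Real.exp 1 := Real.exp_pos 1
  by_cases hk : (k : ℝ) ≤ Real.exp 1 * Real.sqrt L
  · have h1 : Real.log L ≤ 2 * Real.sqrt L := by
      rw [hlog]
      have := Real.log_le_sub_one_of_pos hsq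
      linarith
    calc (k : ℝ) * Real.log L ≤ (Real.exp 1 * Real.sqrt L) * (2 * Real.sqrt L) := by gcongr
      _ = 2 * Real.exp 1 * (Real.sqrt L * Real.sqrt L) := by ring
      _ = 2 * Real.exp 1 * L := by rw [Real.mul_self_sqrt (by linarith)]
      _ ≤ _ := by nlinarith
  · rw [not_le] at hk
    have hkpos : (0 : ℝ) < k := lt_trans (by positivity) hk
    have hk0 : k ≠ 0 := by rintro rfl; simp at hkpos
    have h1 : 1 + Real.log L / 2 ≤ Real.log k := by
      have := Real.log_le_log (by positivity) hk.le
      rw [Real.log_mul he.ne' hsq.ne', Real.log_exp] at this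
      linarith
    have h2 := Stirling.le_log_factorial_stirling hk0
    have h3 : Real.log (k.factorial) ≤ B * L := by
      have : Real.log (k.factorial) ≤ Real.log ((M : ℝ) ^ B) := by
        apply Real.log_le_log
        · exact_mod_cast k.factorial_pos
        · exact_mod_cast h
      rwa [Real.log_pow] at this
    have h4 : 0 ≤ Real.log (2 * Real.pi) := by
      apply Real.log_nonneg
      have := Real.pi_gt_three
      linarith
    have h5 : (k : ℝ) * (1 + Real.log L / 2) ≤ k * Real.log k := by gcongr
    nlinarith [mul_pos he (by linarith : 0 < L)]

lemma natAbs_coeff_le_mvNorm {n : ℕ} (F : MvPolynomial (Fin n) ℤ) (m : Fin n →₀ ℕ) :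
    (MvPolynomial.coeff m F).natAbs ≤ mvNorm F := by
  by_cases hm : m ∈ F.support
  · exact Finset.le_sup (f := fun m => (F.coeff m).natAbs) hm
  · rw [MvPolynomial.notMem_support_iff.mp hm]; simp

lemma key_int (n a b : ℕ) (ha : 1 ≤ a) (hb : 1 ≤ b) :
    ∃ B : ℕ, ∀ F : MvPolynomial (Fin n) ℤ, F.totalDegree = a + b →
      Irreducible (MvPolynomial.map (Int.castRingHom (AlgebraicClosure ℚ)) F) →
      3 ≤ mvNorm F → ∃ N : ℤ, N ≠ 0 ∧ N.natAbs ≤ mvNorm F ^ B ∧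
        ∀ (p : ℕ) [Fact p.Prime] (G H : MvPolynomial (Fin n) (AlgebraicClosure (ZMod p))),
          G.totalDegree ≤ a → H.totalDegree ≤ b →
          G * H = MvPolynomial.map (Int.castRingHom (AlgebraicClosure (ZMod p))) F →
          (p : ℤ) ∣ N := by
  obtain ⟨S, hS⟩ := (isNoetherianRing_iff_ideal_fg _).mp
    (inferInstance : IsNoetherianRing (MvPolynomial (expo n (a + b)) ℤ))
    (RingHom.ker (mulMap n a b))
  choose B hB using fun P : MvPolynomial (expo n (a + b)) ℤ => eval_bound P
  refine ⟨S.sup B, fun F hdeg hirr hM => ?_⟩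
  have hinj : Function.Injective (Int.castRingHom (AlgebraicClosure ℚ)) :=
    (Int.castRingHom (AlgebraicClosure ℚ)).injective_int
  have hdeg' : (MvPolynomial.map (Int.castRingHom (AlgebraicClosure ℚ)) F).totalDegree = a + b := by
    rw [← hdeg, MvPolynomial.totalDegree, MvPolynomial.totalDegree,
      MvPolynomial.support_map_of_injective _ hinj]
  have hex : ∃ P ∈ S, evCoeff (d := a + b) F P ≠ 0 := by
    by_contra hcon
    push Not at hcon
    obtain ⟨G, H, hG, hH, hGH⟩ := exists_factor (a := a) (b := b) _ hirr.ne_zero hdeg'.le (by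
      rw [← hS]
      refine Ideal.span_le.mpr fun P hP => ?_
      rw [SetLike.mem_coe, RingHom.mem_ker, evCoeff_map, hcon P hP, map_zero])
    have h1 := MvPolynomial.totalDegree_mul G H
    rw [hGH, hdeg'] at h1
    rcases hirr.isUnit_or_isUnit hGH.symm with hu | hu
    · rw [MvPolynomial.isUnit_iff_totalDegree_of_isReduced] at hu
      omega
    · rw [MvPolynomial.isUnit_iff_totalDegree_of_isReduced] at hu
      omega
  obtain ⟨P, hPS, hP⟩ := hex
  refine ⟨evCoeff (d := a + b) F P, hP, ?_, ?_⟩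
  · refine (hB P _ (mvNorm F) hM fun m => natAbs_coeff_le_mvNorm F _).trans ?_
    exact Nat.pow_le_pow_right (by omega) (Finset.le_sup hPS)
  · intro p _ G H hG hH hGH
    have hPk : P ∈ RingHom.ker (mulMap n a b) := by
      rw [← hS]; exact Ideal.subset_span hPS
    have := evCoeff_mul_eq_zero G H hG hH P hPk
    rw [hGH, evCoeff_map] at this
    rw [eq_intCast] at this
    exact (CharP.intCast_eq_zero_iff (AlgebraicClosure (ZMod p)) p _).mp this

theorem statement6 (n D : ℕ) (hn : 1 ≤ n) (hD : 1 ≤ D) :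
    ∃ C : ℝ, 0 < C ∧
      ∀ F : MvPolynomial (Fin n) ℤ,
        F.totalDegree = D →
        Irreducible (MvPolynomial.map (Int.castRingHom (AlgebraicClosure ℚ)) F) →
        3 ≤ mvNorm F →
        ∃ E : Finset ℕ, (∀ p ∈ E, p.Prime) ∧
          (E.card : ℝ) ≤
            C * Real.log (mvNorm F : ℝ) / Real.log (Real.log (mvNorm F : ℝ)) ∧
          ∀ p : ℕ, ∀ hp : p.Prime, p ∉ E →
            (MvPolynomial.map (Int.castRingHom (ZMod p)) F).totalDegree = D ∧
            (haveI : Fact p.Prime := ⟨hp⟩;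
              Irreducible (MvPolynomial.map (Int.castRingHom (AlgebraicClosure (ZMod p))) F)) := by
  have hk : ∀ a : ℕ, ∃ B : ℕ, 1 ≤ a → a < D → ∀ F : MvPolynomial (Fin n) ℤ, F.totalDegree = D →
      Irreducible (MvPolynomial.map (Int.castRingHom (AlgebraicClosure ℚ)) F) →
      3 ≤ mvNorm F → ∃ N : ℤ, N ≠ 0 ∧ N.natAbs ≤ mvNorm F ^ B ∧
        ∀ (p : ℕ) [Fact p.Prime] (G H : MvPolynomial (Fin n) (AlgebraicClosure (ZMod p))),
          G.totalDegree ≤ a → H.totalDegree ≤ D - a →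
          G * H = MvPolynomial.map (Int.castRingHom (AlgebraicClosure (ZMod p))) F →
          (p : ℤ) ∣ N := by
    intro a
    by_cases h : 1 ≤ a ∧ a < D
    · obtain ⟨B, hB⟩ := key_int n a (D - a) h.1 (by omega)
      refine ⟨B, fun _ _ F hF => hB F ?_⟩
      omega
    · exact ⟨0, fun h1 h2 => absurd ⟨h1, h2⟩ h⟩
  choose B hB using hk
  refine ⟨2 * (1 + ∑ a ∈ Finset.Ico 1 D, B a : ℕ) + 2 * Real.exp 1, by positivity, ?_⟩
  intro F hdeg hirr hM
  have hN : ∀ a : ℕ, ∃ N : ℤ, a ∈ Finset.Ico 1 D → (N ≠ 0 ∧ N.natAbs ≤ mvNorm F ^ B a ∧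
        ∀ (p : ℕ) [Fact p.Prime] (G H : MvPolynomial (Fin n) (AlgebraicClosure (ZMod p))),
          G.totalDegree ≤ a → H.totalDegree ≤ D - a →
          G * H = MvPolynomial.map (Int.castRingHom (AlgebraicClosure (ZMod p))) F →
          (p : ℤ) ∣ N) := by
    intro a
    by_cases h : a ∈ Finset.Ico 1 D
    · obtain ⟨N, hN⟩ := hB a (Finset.mem_Ico.mp h).1 (Finset.mem_Ico.mp h).2 F hdeg hirr hM
      exact ⟨N, fun _ => hN⟩
    · exact ⟨0, fun h1 => absurd h1 h⟩
  choose N hN using hN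
  have hF0 : F ≠ 0 := by
    rintro rfl
    simp at hdeg
    omega
  obtain ⟨m0, hm0, hm0deg⟩ : ∃ m ∈ F.support, m.degree = D := by
    obtain ⟨m, hm, he⟩ := Finset.exists_mem_eq_sup F.support
      (MvPolynomial.support_nonempty.mpr hF0) (fun s => s.degree)
    refine ⟨m, hm, ?_⟩
    rw [← he, ← hdeg]
    rfl
  have hc0 : MvPolynomial.coeff m0 F ≠ 0 := MvPolynomial.mem_support_iff.mp hm0
  set Z : ℕ := (MvPolynomial.coeff m0 F).natAbs * ∏ a ∈ Finset.Ico 1 D, (N a).natAbs with hZ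
  have hZ0 : Z ≠ 0 := by
    refine mul_ne_zero (Int.natAbs_ne_zero.mpr hc0) ?_
    exact Finset.prod_ne_zero_iff.mpr fun a ha => Int.natAbs_ne_zero.mpr (hN a ha).1
  have hZle : Z ≤ mvNorm F ^ (1 + ∑ a ∈ Finset.Ico 1 D, B a) := by
    rw [pow_add, pow_one, ← Finset.prod_pow_eq_pow_sum]
    exact Nat.mul_le_mul (natAbs_coeff_le_mvNorm F m0)
      (Finset.prod_le_prod' fun a ha => (hN a ha).2.1)
  refine ⟨Z.primeFactors, fun p hp => Nat.prime_of_mem_primeFactors hp, ?_, ?_⟩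
  · apply count_bound _ _ _ hM
    refine (factorial_card_le_prod _ fun p hp => (Nat.prime_of_mem_primeFactors hp).pos).trans ?_
    exact (Nat.le_of_dvd (Nat.pos_of_ne_zero hZ0) (Nat.prod_primeFactors_dvd Z)).trans hZle
  · intro p hp hpE
    have hfact : Fact p.Prime := ⟨hp⟩
    have hpZ : ¬ p ∣ Z := fun h => hpE (Nat.mem_primeFactors.mpr ⟨hp, h, hZ0⟩)
    have hpc : ¬ (p : ℤ) ∣ MvPolynomial.coeff m0 F := fun h =>
      hpZ (Dvd.dvd.mul_right (Int.natCast_dvd.mp h) _)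
    have hpN : ∀ a ∈ Finset.Ico 1 D, ¬ (p : ℤ) ∣ N a := fun a ha h =>
      hpZ (Dvd.dvd.mul_left ((Int.natCast_dvd.mp h).trans (Finset.dvd_prod_of_mem (fun a => (N a).natAbs) ha)) _)
    have hd : ∀ (K : Type) [Field K] [CharP K p],
        (MvPolynomial.map (Int.castRingHom K) F).totalDegree = D := by
      intro K _ _
      refine le_antisymm (le_trans (Finset.sup_mono (MvPolynomial.support_map_subset _ _)) hdeg.le) ?_
      rw [← hm0deg]
      apply MvPolynomial.le_totalDegree
      rw [MvPolynomial.mem_support_iff, MvPolynomial.coeff_map, eq_intCast, Ne,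
        CharP.intCast_eq_zero_iff K p]
      exact hpc
    refine ⟨hd (ZMod p), ?_⟩
    have hdK := hd (AlgebraicClosure (ZMod p))
    refine ⟨?_, ?_⟩
    · intro hu
      rw [MvPolynomial.isUnit_iff_totalDegree_of_isReduced] at hu
      omega
    · intro G H hGH
      by_contra hcon
      push Not at hcon
      have hne : G * H ≠ 0 := by
        rw [← hGH]
        intro h0
        rw [h0] at hdK
        simp at hdK
        omega
      have hG0 := left_ne_zero_of_mul hne
      have hH0 := right_ne_zero_of_mul hne
      have hpos : ∀ P : MvPolynomial (Fin n) (AlgebraicClosure (ZMod p)), P ≠ 0 → ¬ IsUnit P →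
          1 ≤ P.totalDegree := by
        intro P hP hu
        by_contra hlt
        have h0 : P.totalDegree = 0 := by omega
        apply hu
        rw [MvPolynomial.totalDegree_eq_zero_iff_eq_C] at h0
        rw [h0]
        refine IsUnit.map MvPolynomial.C (isUnit_iff_ne_zero.mpr ?_)
        intro hz
        rw [hz] at h0
        exact hP (by rw [h0, MvPolynomial.C_0])
      have h1 := hpos G hG0 hcon.1
      have h2 := hpos H hH0 hcon.2
      have h3 := MvPolynomial.totalDegree_mul_of_isDomain hG0 hH0
      rw [← hGH, hdK] at h3
      have ha : G.totalDegree ∈ Finset.Ico 1 D := Finset.mem_Ico.mpr ⟨h1, by omega⟩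
      exact hpN _ ha ((hN _ ha).2.2 p G H le_rfl (by omega) hGH.symm)
end
end
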